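/- arXiv:2505.10608 — 9 statements merged into one kernel-verified Lean document; each statement's English description precedes it below -/
import Mathlib

section
/- Let G, P ∈ ℝ[x₁,…,x_N, t] and suppose the function F(x,t) = G(x,t)/t is non-constant on the open half-space H = ℝ^N × (0,∞). If there exists a function a, defined and continuous on the image F(H), such that P(x,t) = a(F(x,t)) for all (x,t) ∈ H, then P and G/t are algebraically dependent elements of the fraction field K. -/
/-!
Restricted to a line, `P` and `G/D` lie in the field `ℝ(X)`, of transcendence degree one, so some
`R ≠ 0` satisfies `R(P, G/D) = 0` on that line. Since `P = a(G/D)`, this says `R(a(y), y) = 0` for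
every value `y` that `G/D` takes on a segment of the line. If `G/D` is not constant on the segment,
these values fill an interval, and `R(P, G/D) = R(a(G/D), G/D)` vanishes on the open set where `G/D`
takes values inside that interval; hence it vanishes identically. Where `G/D` is locally equal to a
constant `c`, the relation `Y - c` serves instead.
-/

open MvPolynomial Topology

section ClearDenominator

variable {k A K : Type*} [CommRing k] [CommRing A] [Algebra k A] [Field K] [Algebra k K]

/-- The numerator `d ^ n * R(p, g / d)` of the substitution of `p` and `g / d` in `R(X, Y)`, where
`n` is the degree of `R` in `Y`. The truncated subtraction is harmless because `m 1 ≤ n` for every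
exponent `m` of `R`. -/
noncomputable def clearDenominator (R : MvPolynomial (Fin 2) k) (p g d : A) : A :=
  ∑ m ∈ R.support, R.coeff m • (p ^ m 0 * g ^ m 1 * d ^ (R.degreeOf 1 - m 1))

lemma map_clearDenominator (R : MvPolynomial (Fin 2) k) (p g : A) {d : A} (φ : A →ₐ[k] K)
    (hd : φ d ≠ 0) :
    φ (clearDenominator R p g d) = φ d ^ R.degreeOf 1 * aeval ![φ p, φ g / φ d] R := by
  simp only [clearDenominator, map_sum, map_mul, map_pow, aeval_def, eval₂_eq',
    Fin.prod_univ_two, Matrix.cons_val_zero, Matrix.cons_val_one, Finset.mul_sum,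
    Algebra.smul_def, AlgHom.commutes]
  refine Finset.sum_congr rfl fun m hm => ?_
  rw [pow_sub₀ _ hd (monomial_le_degreeOf 1 hm), div_pow]
  ring

lemma map_clearDenominator_eq_zero_iff {R : MvPolynomial (Fin 2) k} {p g d : A} {φ : A →ₐ[k] K}
    (hd : φ d ≠ 0) :
    φ (clearDenominator R p g d) = 0 ↔ aeval ![φ p, φ g / φ d] R = 0 := by
  rw [map_clearDenominator R p g φ hd, mul_eq_zero, or_iff_right (pow_ne_zero _ hd)]

end ClearDenominator

section Line

lemma exists_aeval_eq_zero_of_trdeg_lt.{u, v, w} {k : Type u} {A : Type v}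
    {ι : Type w} [CommRing k] [Nontrivial k] [CommRing A] [Algebra k A] (x : ι → A)
    (h : Cardinal.lift.{w} (Algebra.trdeg k A) < Cardinal.lift.{v} (Cardinal.mk ι)) :
    ∃ R : MvPolynomial ι k, R ≠ 0 ∧ aeval x R = 0 := by
  by_contra! hx
  have hind : AlgebraicIndependent k x :=
    algebraicIndependent_iff.2 fun R => not_imp_not.1 (hx R)
  exact h.not_ge hind.lift_cardinalMk_le_trdeg

lemma trdeg_fractionRing (k A : Type*) [CommRing k] [Nontrivial k] [CommRing A] [IsDomain A]
    [Algebra k A] [FaithfulSMul k A] :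
    Algebra.trdeg k (FractionRing A) = Algebra.trdeg k A := by
  have : Algebra.IsAlgebraic A (FractionRing A) :=
    IsLocalization.isAlgebraic _ (nonZeroDivisors A)
  rw [← trdeg_add_eq k A (A := FractionRing A), trdeg_eq_zero (R := A), add_zero]

variable {k : Type*} [Field k]

lemma exists_aeval_eval_div_eq_zero (p g d : Polynomial k) :
    ∃ R : MvPolynomial (Fin 2) k, R ≠ 0 ∧
      ∀ s, d.eval s ≠ 0 → aeval ![p.eval s, g.eval s / d.eval s] R = 0 := by
  let ι := IsScalarTower.toAlgHom k (Polynomial k) (FractionRing (Polynomial k))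
  have hι : Function.Injective ι := IsFractionRing.injective _ _
  obtain ⟨R, hR, hR0⟩ := exists_aeval_eq_zero_of_trdeg_lt (k := k) ![ι p, ι g / ι d] <| by
    simp [trdeg_fractionRing, Polynomial.trdeg_of_isDomain]
  refine ⟨R, hR, fun s hs => ?_⟩
  have hd : ι d ≠ 0 := (map_ne_zero_iff ι hι).2 fun hd => hs (by rw [hd, Polynomial.eval_zero])
  have hnum : clearDenominator R p g d = 0 :=
    (map_eq_zero_iff ι hι).1 ((map_clearDenominator_eq_zero_iff hd).2 hR0)
  exact (map_clearDenominator_eq_zero_iff (φ := Polynomial.aeval s) hs).1 (by rw [hnum, map_zero])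

variable {σ : Type*}

/-- The restriction of polynomials on `σ → k` to the line through `u` and `v`, with the parameter
of `AffineMap.lineMap u v` as the variable. -/
noncomputable def restrictLine (u v : σ → k) : MvPolynomial σ k →ₐ[k] Polynomial k :=
  aeval fun i =>
    AffineMap.lineMap (k := Polynomial k) (Polynomial.C (u i)) (Polynomial.C (v i)) Polynomial.X

lemma eval_restrictLine (u v : σ → k) (s : k) (p : MvPolynomial σ k) :
    (restrictLine u v p).eval s = eval (AffineMap.lineMap u v s) p := by
  have h : (Polynomial.aeval s).comp (restrictLine u v) = aeval (AffineMap.lineMap u v s) := by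
    ext i
    simp [restrictLine, AffineMap.lineMap_apply_ring', AffineMap.pi_lineMap_apply]
  exact DFunLike.congr_fun h p

lemma exists_aeval_eval_lineMap_div_eq_zero (P G D : MvPolynomial σ k) (u v : σ → k) :
    ∃ R : MvPolynomial (Fin 2) k, R ≠ 0 ∧ ∀ s : k, eval (AffineMap.lineMap u v s) D ≠ 0 →
      aeval ![eval (AffineMap.lineMap u v s) P,
        eval (AffineMap.lineMap u v s) G / eval (AffineMap.lineMap u v s) D] R = 0 := by
  simpa only [eval_restrictLine] using
    exists_aeval_eval_div_eq_zero (restrictLine u v P) (restrictLine u v G) (restrictLine u v D)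

end Line

section Neighborhood

variable {σ : Type*}

lemma eq_zero_of_eventually_eval_eq_zero {k : Type*} [CommRing k] [IsDomain k]
    [TopologicalSpace k] [T1Space k] [∀ x : k, (𝓝[≠] x).NeBot] {p : MvPolynomial σ k}
    {u : σ → k} (h : ∀ᶠ w in 𝓝 u, eval w p = 0) : p = 0 := by
  rw [Filter.Eventually, nhds_pi, Filter.mem_pi] at h
  obtain ⟨I, -, s, hs, hsub⟩ := h
  refine funext_set s (fun i => infinite_of_mem_nhds _ (hs i)) fun w hw => ?_
  rw [map_zero]
  exact hsub fun i _ => hw i trivial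

lemma aeval_algebraMap_div_eq_zero_of_eventually {k : Type*} [Field k]
    [TopologicalSpace k] [T1Space k] [∀ x : k, (𝓝[≠] x).NeBot] {P G D : MvPolynomial σ k}
    {R : MvPolynomial (Fin 2) k} {u : σ → k} (hD : ∀ᶠ w in 𝓝 u, eval w D ≠ 0)
    (hR : ∀ᶠ w in 𝓝 u, aeval ![eval w P, eval w G / eval w D] R = 0) :
    aeval ![algebraMap _ (FractionRing (MvPolynomial σ k)) P,
      algebraMap _ (FractionRing (MvPolynomial σ k)) G / algebraMap _ _ D] R = 0 := by
  let ι := IsScalarTower.toAlgHom k (MvPolynomial σ k) (FractionRing (MvPolynomial σ k))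
  have hι : Function.Injective ι := IsFractionRing.injective _ _
  have hnum : clearDenominator R P G D = 0 := by
    refine eq_zero_of_eventually_eval_eq_zero (u := u) ?_
    filter_upwards [hD, hR] with w hDw hRw
    exact (map_clearDenominator_eq_zero_iff (φ := aeval w) hDw).2 hRw
  have hD0 : ι D ≠ 0 := by
    obtain ⟨w, hw⟩ := hD.exists
    exact (map_ne_zero_iff ι hι).2 fun h => hw (by rw [h, map_zero])
  exact (map_clearDenominator_eq_zero_iff hD0).1 (by rw [hnum, map_zero])

lemma continuousAt_eval_div {k : Type*} [Field k] [TopologicalSpace k] [IsTopologicalDivisionRing k]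
    (G : MvPolynomial σ k) {D : MvPolynomial σ k} {w : σ → k} (hD : eval w D ≠ 0) :
    ContinuousAt (fun w => eval w G / eval w D) w :=
  (continuous_eval G).continuousAt.div (continuous_eval D).continuousAt hD

variable {P G D : MvPolynomial σ ℝ} {a : ℝ → ℝ} {u v : σ → ℝ}

lemma uIcc_subset_image_segment_eval_div (hD : ∀ w ∈ segment ℝ u v, eval w D ≠ 0) :
    Set.uIcc (eval u G / eval u D) (eval v G / eval v D) ⊆
      (fun w => eval w G / eval w D) '' segment ℝ u v :=
  ((convex_segment u v).isPreconnected.image _ fun w hw =>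
    (continuousAt_eval_div G (hD w hw)).continuousWithinAt).ordConnected.uIcc_subset
      (Set.mem_image_of_mem _ (left_mem_segment ℝ u v))
      (Set.mem_image_of_mem _ (right_mem_segment ℝ u v))

lemma exists_aeval_graph_eq_zero (hD : ∀ w ∈ segment ℝ u v, eval w D ≠ 0)
    (hP : ∀ w ∈ segment ℝ u v, eval w P = a (eval w G / eval w D)) :
    ∃ R : MvPolynomial (Fin 2) ℝ, R ≠ 0 ∧
      ∀ y ∈ Set.uIcc (eval u G / eval u D) (eval v G / eval v D), aeval ![a y, y] R = 0 := by
  obtain ⟨R, hR, hline⟩ := exists_aeval_eval_lineMap_div_eq_zero P G D u v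
  refine ⟨R, hR, fun y hy => ?_⟩
  obtain ⟨w, hw, rfl⟩ := uIcc_subset_image_segment_eval_div hD hy
  rw [← hP w hw]
  obtain ⟨s, -, rfl⟩ := segment_eq_image_lineMap ℝ u v ▸ hw
  exact hline s (hD _ hw)

lemma exists_eventually_aeval_eq_zero_of_segment (hD : ∀ w ∈ segment ℝ u v, eval w D ≠ 0)
    (hP : ∀ w ∈ segment ℝ u v, ∀ᶠ z in 𝓝 w, eval z P = a (eval z G / eval z D))
    (huv : eval u G / eval u D ≠ eval v G / eval v D) :
    ∃ R : MvPolynomial (Fin 2) ℝ, R ≠ 0 ∧ ∃ w ∈ segment ℝ u v,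
      ∀ᶠ z in 𝓝 w, aeval ![eval z P, eval z G / eval z D] R = 0 := by
  obtain ⟨R, hR, hgraph⟩ := exists_aeval_graph_eq_zero hD fun w hw => (hP w hw).self_of_nhds
  obtain ⟨y, hy⟩ := exists_between (inf_lt_sup.2 huv)
  obtain ⟨w, hw, rfl⟩ := uIcc_subset_image_segment_eval_div hD (Set.Ioo_subset_Icc_self hy)
  refine ⟨R, hR, w, hw, ?_⟩
  filter_upwards [hP w hw, (continuousAt_eval_div G (hD w hw)).eventually (Ioo_mem_nhds hy.1 hy.2)]
    with z hPz hz
  rw [hPz]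
  exact hgraph _ (Set.Ioo_subset_Icc_self hz)

end Neighborhood

theorem stmt_2_general {σ : Type*} {P G D : MvPolynomial σ ℝ} {a : ℝ → ℝ} {u : σ → ℝ}
    (hD : eval u D ≠ 0) (hP : ∀ᶠ w in 𝓝 u, eval w P = a (eval w G / eval w D)) :
    ∃ R : MvPolynomial (Fin 2) ℝ, R ≠ 0 ∧
      aeval ![algebraMap _ (FractionRing (MvPolynomial σ ℝ)) P,
        algebraMap _ (FractionRing (MvPolynomial σ ℝ)) G / algebraMap _ _ D] R = 0 := by
  have hDu : ∀ᶠ w in 𝓝 u, eval w D ≠ 0 := (continuous_eval D).continuousAt.eventually_ne hD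
  obtain ⟨V, ⟨hVu, hV⟩, hVsub⟩ := (LocallyConvexSpace.convex_basis (𝕜 := ℝ) u).mem_iff.1
    (hDu.eventually_nhds.and hP.eventually_nhds)
  by_cases hconst : ∀ w ∈ V, eval w G / eval w D = eval u G / eval u D
  · refine ⟨X 1 - C (eval u G / eval u D), fun h => ?_,
      aeval_algebraMap_div_eq_zero_of_eventually hDu ?_⟩
    · simpa using congrArg (eval fun _ => eval u G / eval u D + 1) h
    filter_upwards [hVu] with w hw
    simp [hconst w hw]
  · push Not at hconst
    obtain ⟨v, hv, huv⟩ := hconst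
    have hseg : segment ℝ u v ⊆ V := hV.segment_subset (mem_of_mem_nhds hVu) hv
    obtain ⟨R, hR, w, hw, hzero⟩ := exists_eventually_aeval_eq_zero_of_segment
      (fun w hw => (hVsub (hseg hw)).1.self_of_nhds) (fun w hw => (hVsub (hseg hw)).2) huv.symm
    exact ⟨R, hR, aeval_algebraMap_div_eq_zero_of_eventually (hVsub (hseg hw)).1 hzero⟩

/-- Polynomials `G, P ∈ ℝ[x₁,…,x_N, t]` (modelled as
`MvPolynomial (Fin N ⊕ Unit) ℝ`, `t = X (Sum.inr ())`) are identified with the functions they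
define on `ℝ^N × ℝ`.  Suppose `F(x,t) = G(x,t)/t` is non-constant on the open half-space
`H = ℝ^N × (0,∞)` and there is a function `a` continuous on `F(H)` with `P = a ∘ F` on `H`.
Then `P` and `G/t` are algebraically dependent elements of the fraction field. -/
theorem stmt_2 (N : ℕ) (P G : MvPolynomial (Fin N ⊕ Unit) ℝ)
    (F : (Fin N → ℝ) × ℝ → ℝ)
    (hF : ∀ p : (Fin N → ℝ) × ℝ,
      F p = MvPolynomial.eval (Sum.elim p.1 fun _ => p.2) G / p.2)
    (hnc : ∃ p ∈ {q : (Fin N → ℝ) × ℝ | 0 < q.2}, ∃ p' ∈ {q : (Fin N → ℝ) × ℝ | 0 < q.2},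
      F p ≠ F p')
    (a : ℝ → ℝ)
    (ha : ContinuousOn a (F '' {q : (Fin N → ℝ) × ℝ | 0 < q.2}))
    (hP : ∀ p ∈ {q : (Fin N → ℝ) × ℝ | 0 < q.2},
      MvPolynomial.eval (Sum.elim p.1 fun _ => p.2) P = a (F p)) :
    ∃ R : MvPolynomial (Fin 2) ℝ, R ≠ 0 ∧
      MvPolynomial.eval₂
        ((algebraMap (MvPolynomial (Fin N ⊕ Unit) ℝ)
            (FractionRing (MvPolynomial (Fin N ⊕ Unit) ℝ))).comp MvPolynomial.C)
        ![algebraMap (MvPolynomial (Fin N ⊕ Unit) ℝ)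
            (FractionRing (MvPolynomial (Fin N ⊕ Unit) ℝ)) P,
          algebraMap (MvPolynomial (Fin N ⊕ Unit) ℝ)
            (FractionRing (MvPolynomial (Fin N ⊕ Unit) ℝ)) G /
          algebraMap (MvPolynomial (Fin N ⊕ Unit) ℝ)
            (FractionRing (MvPolynomial (Fin N ⊕ Unit) ℝ))
            (MvPolynomial.X (Sum.inr ()))] R = 0 := by
  have hU : ∀ᶠ w : Fin N ⊕ Unit → ℝ in 𝓝 1, 0 < w (.inr ()) :=
    (continuous_apply _).continuousAt.eventually_const_lt one_pos
  refine stmt_2_general (a := a) (u := 1) (by simp) (hU.mono fun w hw => ?_)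
  have hsplit : (Sum.elim (w ∘ .inl) fun _ => w (.inr ())) = w := Sum.elim_comp_inl_inr w
  simpa [hF, hsplit] using hP (w ∘ .inl, w (.inr ())) hw
end

section
/- Let G be a polynomial function on V × Z × ℝ not divisible by t, set F = G/t, and suppose there exist b₁, b₀ ∈ ℝ such that F satisfies the transnormality condition. Write G(v,z,t) = Σ_{k=0}^r G_k(v,z)·t^k with G_r ≠ 0, so r is the degree of G in the variable t. Then r ≤ 2, and if r ≥ 1 then G_r is a constant polynomial. -/
noncomputable section

open MvPolynomial

/-- The standard inner product on `ℝᵏ`. -/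
def dotR {k : ℕ} (a b : Fin k → ℝ) : ℝ := ∑ i, a i * b i

/-- Evaluation of a polynomial on `V × Z × ℝ` (`V = ℝⁿ`, `Z = ℝᵐ`) at the point `(v, z, t)`. -/
def evp {n m : ℕ} (q : MvPolynomial (Fin n ⊕ Fin m ⊕ Unit) ℝ)
    (v : Fin n → ℝ) (z : Fin m → ℝ) (t : ℝ) : ℝ :=
  MvPolynomial.eval (Sum.elim v (Sum.elim z fun _ => t)) q

/-- The transnormality condition for `F = G/t` with constants `b₁, b₀`:
`(1/t)(−2G·∂_tG + Σᵢ (∂_{eᵢ}G − ½∂_{[eᵢ,v]}G)²) + Σ_α (∂_{f_α}G)² + (∂_tG)² = b₁·(G/t) + b₀`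
at every point of the half-space `S = {t > 0}`, where the partial derivatives of the polynomial
`G` are the polynomial partial derivatives, and `∂_{[eᵢ,v]}G = Σ_α [eᵢ,v]_α · ∂_{f_α}G` with
`[·,·] = br` the Lie bracket `V × V → Z`. -/
def Transnormal (n m : ℕ) (br : (Fin n → ℝ) →ₗ[ℝ] (Fin n → ℝ) →ₗ[ℝ] (Fin m → ℝ))
    (G : MvPolynomial (Fin n ⊕ Fin m ⊕ Unit) ℝ) (b₁ b₀ : ℝ) : Prop :=
  ∀ (v : Fin n → ℝ) (z : Fin m → ℝ) (t : ℝ), 0 < t →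
    (1 / t) * (-2 * evp G v z t * evp (pderiv (Sum.inr (Sum.inr ())) G) v z t
        + ∑ i : Fin n,
            (evp (pderiv (Sum.inl i) G) v z t
              - (1 / 2) * ∑ α : Fin m,
                  (br (Pi.single i 1) v) α * evp (pderiv (Sum.inr (Sum.inl α)) G) v z t) ^ 2)
      + (∑ α : Fin m, (evp (pderiv (Sum.inr (Sum.inl α)) G) v z t) ^ 2)
      + (evp (pderiv (Sum.inr (Sum.inr ())) G) v z t) ^ 2
    = b₁ * (evp G v z t / t) + b₀

/-!
Restrict everything to a vertical line `{(v, z)} × ℝ`. There transnormality becomes the identity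
`∑ᵢ xᵢ² + t ∑_α a_α² = 2 g g' - t g'² + b₁ g + b₀ t` in `ℝ[t]`, with `g` the restriction of `G`,
`a_α` that of `∂_{f_α} G` and `xᵢ` that of `∂_{eᵢ} G - ½ ∂_{[eᵢ, v]} G`. All summands on the left
have nonnegative leading coefficients, so no top terms cancel there. If `r ≥ 1`, the right side has
degree at most `2r - 1`; hence all `xᵢ` and `a_α` have degree less than `r`, which says that every
first derivative of `G_r` vanishes at `(v, z)`. If `r ≥ 3`, the coefficient of `t^(2r-1)` on the
right is `r (2 - r) G_r(v, z)²`; it must be nonnegative, so `G_r` would vanish identically.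
-/

open scoped Polynomial

theorem coeff_nonneg_of_leadingCoeff_nonneg {R : Type*} [Semiring R] [Preorder R]
    {p : R[X]} (hp : 0 ≤ p.leadingCoeff) {N : ℕ} (hN : p.natDegree ≤ N) :
    0 ≤ p.coeff N := by
  rcases hN.eq_or_lt with rfl | hlt
  · exact hp
  · exact (Polynomial.coeff_eq_zero_of_natDegree_lt hlt).ge

section NonnegLeadingCoeff

variable {R : Type*} [Semiring R] [PartialOrder R] [IsOrderedAddMonoid R]

theorem degree_add_of_leadingCoeff_nonneg {p q : R[X]} (hp : 0 ≤ p.leadingCoeff)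
    (hq : 0 ≤ q.leadingCoeff) : (p + q).degree = max p.degree q.degree := by
  rcases eq_or_ne p 0 with rfl | hp0
  · simp
  have hp_pos : 0 < p.leadingCoeff := hp.lt_of_ne' (Polynomial.leadingCoeff_ne_zero.2 hp0)
  exact Polynomial.degree_add_eq_of_leadingCoeff_add_ne_zero
    (add_pos_of_pos_of_nonneg hp_pos hq).ne'

theorem leadingCoeff_add_nonneg {p q : R[X]} (hp : 0 ≤ p.leadingCoeff)
    (hq : 0 ≤ q.leadingCoeff) : 0 ≤ (p + q).leadingCoeff := by
  rcases lt_trichotomy p.degree q.degree with hlt | heq | hgt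
  · rwa [Polynomial.leadingCoeff_add_of_degree_lt hlt]
  · have hdeg : (p + q).natDegree = p.natDegree := Polynomial.natDegree_eq_of_degree_eq <| by
      rw [degree_add_of_leadingCoeff_nonneg hp hq, heq, max_self]
    rw [Polynomial.leadingCoeff, hdeg, Polynomial.coeff_add]
    refine add_nonneg hp ?_
    rwa [Polynomial.natDegree_eq_of_degree_eq heq]
  · rwa [Polynomial.leadingCoeff_add_of_degree_lt' hgt]

theorem leadingCoeff_sum_nonneg {ι : Type*} {s : Finset ι} {f : ι → R[X]}
    (hf : ∀ i ∈ s, 0 ≤ (f i).leadingCoeff) : 0 ≤ (∑ i ∈ s, f i).leadingCoeff :=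
  Finset.sum_induction f (fun p => 0 ≤ p.leadingCoeff) (fun _ _ => leadingCoeff_add_nonneg)
    (by simp) hf

theorem degree_le_degree_sum_of_leadingCoeff_nonneg {ι : Type*} {s : Finset ι} {f : ι → R[X]}
    (hf : ∀ i ∈ s, 0 ≤ (f i).leadingCoeff) {i : ι} (hi : i ∈ s) :
    (f i).degree ≤ (∑ j ∈ s, f j).degree := by
  classical
  have hrest : 0 ≤ (∑ j ∈ s.erase i, f j).leadingCoeff :=
    leadingCoeff_sum_nonneg fun j hj => hf j (Finset.mem_of_mem_erase hj)
  rw [← Finset.add_sum_erase s f hi, degree_add_of_leadingCoeff_nonneg (hf i hi) hrest]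
  exact le_max_left _ _

end NonnegLeadingCoeff

section SumSq

variable {R : Type*} [Ring R] [LinearOrder R] [IsStrictOrderedRing R]

theorem leadingCoeff_sq_nonneg (p : R[X]) : 0 ≤ (p ^ 2).leadingCoeff := by
  rw [Polynomial.leadingCoeff_pow]
  exact sq_nonneg _

theorem leadingCoeff_sum_sq_nonneg {ι : Type*} (s : Finset ι) (f : ι → R[X]) :
    0 ≤ (∑ i ∈ s, f i ^ 2).leadingCoeff :=
  leadingCoeff_sum_nonneg fun i _ => leadingCoeff_sq_nonneg (f i)

theorem leadingCoeff_X_mul_sum_sq_nonneg {ι : Type*} (s : Finset ι) (f : ι → R[X]) :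
    0 ≤ (Polynomial.X * ∑ i ∈ s, f i ^ 2).leadingCoeff := by
  rw [Polynomial.leadingCoeff_mul, Polynomial.leadingCoeff_X, one_mul]
  exact leadingCoeff_sum_sq_nonneg s f

theorem two_mul_natDegree_le_natDegree_sum_sq {ι : Type*} [Fintype ι] (f : ι → R[X]) (i : ι) :
    2 * (f i).natDegree ≤ (∑ j, f j ^ 2).natDegree := by
  rw [← Polynomial.natDegree_pow]
  exact Polynomial.natDegree_le_natDegree <| degree_le_degree_sum_of_leadingCoeff_nonneg
    (fun j _ => leadingCoeff_sq_nonneg (f j)) (Finset.mem_univ i)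

theorem natDegree_le_of_natDegree_sum_sq_add_X_mul_sum_sq_le {ι κ : Type*} [Fintype ι] [Fintype κ]
    {x : ι → R[X]} {a : κ → R[X]} {d : ℕ}
    (h : (∑ i, x i ^ 2 + Polynomial.X * ∑ α, a α ^ 2).natDegree ≤ 2 * d + 1) :
    (∀ i, (x i).natDegree ≤ d) ∧ ∀ α, (a α).natDegree ≤ d := by
  have hdeg := degree_add_of_leadingCoeff_nonneg (leadingCoeff_sum_sq_nonneg Finset.univ x)
    (leadingCoeff_X_mul_sum_sq_nonneg Finset.univ a)
  have hx : (∑ i, x i ^ 2).natDegree ≤ 2 * d + 1 :=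
    (Polynomial.natDegree_le_natDegree (hdeg.ge.trans' (le_max_left _ _))).trans h
  have ha : (Polynomial.X * ∑ α, a α ^ 2).natDegree ≤ 2 * d + 1 :=
    (Polynomial.natDegree_le_natDegree (hdeg.ge.trans' (le_max_right _ _))).trans h
  refine ⟨fun i => ?_, fun α => ?_⟩
  · have := two_mul_natDegree_le_natDegree_sum_sq x i
    omega
  · have hα := two_mul_natDegree_le_natDegree_sum_sq a α
    rcases eq_or_ne (∑ α, a α ^ 2) 0 with h0 | h0
    · rw [h0, Polynomial.natDegree_zero] at hα
      omega
    · rw [Polynomial.natDegree_X_mul h0] at ha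
      omega

end SumSq

section VerticalPart

variable {R : Type*} [CommRing R]

/-- The part of the transnormality condition along a vertical line that involves only the
restriction `g` of `G` to that line: after multiplication by `t`, the condition equates this
polynomial with the squared horizontal gradient plus `t` times the squared central gradient. -/
def verticalPart (b₁ b₀ : R) (g : R[X]) : R[X] :=
  2 * (g * g.derivative) - Polynomial.X * g.derivative ^ 2
    + Polynomial.C b₁ * g + Polynomial.C b₀ * Polynomial.X

variable {b₁ b₀ : R} {g : R[X]} {d : ℕ}

theorem natDegree_verticalPart_le (hg : g.natDegree ≤ d + 1) :
    (verticalPart b₁ b₀ g).natDegree ≤ 2 * d + 1 := by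
  have hg' : g.derivative.natDegree ≤ d := g.natDegree_derivative_le.trans (by omega)
  unfold verticalPart
  compute_degree
  all_goals omega

theorem coeff_verticalPart (hg : g.natDegree ≤ d + 1) (hd : 1 ≤ d) :
    (verticalPart b₁ b₀ g).coeff (2 * d + 1) = (d + 1) * (1 - d) * g.coeff (d + 1) ^ 2 := by
  have hg' : g.derivative.natDegree ≤ d := g.natDegree_derivative_le.trans (by omega)
  have hmul : (g * g.derivative).coeff (2 * d + 1) = g.coeff (d + 1) * g.derivative.coeff d := by
    rw [← Polynomial.coeff_mul_add_eq_of_natDegree_le hg hg']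
    congr 1
    ring
  have hsq : (g.derivative ^ 2).coeff (2 * d) = g.derivative.coeff d ^ 2 :=
    Polynomial.coeff_pow_of_natDegree_le hg'
  have hlin : g.coeff (2 * d + 1) = 0 := Polynomial.coeff_eq_zero_of_natDegree_lt (by omega)
  rw [verticalPart, Polynomial.coeff_add, Polynomial.coeff_add, Polynomial.coeff_sub,
    Polynomial.coeff_ofNat_mul, Polynomial.coeff_X_mul, Polynomial.coeff_C_mul,
    Polynomial.coeff_C_mul, hmul, hsq, hlin, Polynomial.coeff_X_of_ne_one (by omega),
    Polynomial.coeff_derivative]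
  ring

theorem coeff_eq_zero_of_leadingCoeff_verticalPart_nonneg [LinearOrder R] [IsStrictOrderedRing R]
    (h : 0 ≤ (verticalPart b₁ b₀ g).leadingCoeff) (hg : g.natDegree ≤ d + 1) (hd : 2 ≤ d) :
    g.coeff (d + 1) = 0 := by
  have hcoeff := coeff_nonneg_of_leadingCoeff_nonneg h (natDegree_verticalPart_le hg)
  rw [coeff_verticalPart hg (by omega)] at hcoeff
  have hd' : (2 : R) ≤ d := by exact_mod_cast hd
  have hneg : ((d : R) + 1) * (1 - d) < 0 := mul_neg_of_pos_of_neg (by linarith) (by linarith)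
  exact pow_eq_zero_iff two_ne_zero |>.1
    ((nonpos_of_mul_nonneg_right hcoeff hneg).antisymm (sq_nonneg _))

end VerticalPart

section JoinVar

variable {σ τ R : Type*}

/-- The polynomial in the variables `τ` obtained from a univariate polynomial with coefficients in
`R[σ]` by renaming the variables of the coefficients along `ι` and substituting the variable `t`
for the indeterminate. It turns an expansion in powers of `t` into the polynomial it expands. -/
def joinVar [CommSemiring R] (ι : σ → τ) (t : τ) :
    (MvPolynomial σ R)[X] →+* MvPolynomial τ R :=
  Polynomial.eval₂RingHom (rename ι : MvPolynomial σ R →ₐ[R] MvPolynomial τ R).toRingHom (X t)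

theorem joinVar_monomial [CommSemiring R] (ι : σ → τ) (t : τ) (k : ℕ) (p : MvPolynomial σ R) :
    joinVar ι t (Polynomial.monomial k p) = rename ι p * X t ^ k :=
  Polynomial.eval₂_monomial _ _

theorem eval_joinVar [CommSemiring R] (ι : σ → τ) (t : τ) (f : τ → R) (P : (MvPolynomial σ R)[X]) :
    eval f (joinVar ι t P) = (P.map (eval (f ∘ ι))).eval (f t) := by
  induction P using Polynomial.induction_on' with
  | add p q hp hq => simp only [map_add, hp, hq, Polynomial.map_add, Polynomial.eval_add]
  | monomial k p => simp [joinVar_monomial, eval_rename]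

/-- The partial derivative in the variable `j` applied to each coefficient of a univariate
polynomial with coefficients in `R[σ]`. -/
def coeffPDeriv [CommRing R] (j : σ) :
    Derivation R (MvPolynomial σ R)[X] (MvPolynomial σ R)[X] :=
  PolynomialModule.equivPolynomialSelf.compDer (pderiv j).mapCoeffs

theorem coeff_coeffPDeriv [CommRing R] (j : σ) (P : (MvPolynomial σ R)[X]) (k : ℕ) :
    (coeffPDeriv j P).coeff k = pderiv j (P.coeff k) :=
  rfl

theorem coeffPDeriv_monomial [CommRing R] (j : σ) (k : ℕ) (p : MvPolynomial σ R) :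
    coeffPDeriv j (Polynomial.monomial k p) = Polynomial.monomial k (pderiv j p) := by
  ext1 l
  rw [coeff_coeffPDeriv, Polynomial.coeff_monomial, Polynomial.coeff_monomial]
  split_ifs
  · rfl
  · exact map_zero _

theorem pderiv_joinVar [CommRing R] {ι : σ → τ} (hι : Function.Injective ι) {t : τ}
    (ht : t ∉ Set.range ι) (j : σ) (P : (MvPolynomial σ R)[X]) :
    pderiv (ι j) (joinVar ι t P) = joinVar ι t (coeffPDeriv j P) := by
  induction P using Polynomial.induction_on' with
  | add p q hp hq => simp only [map_add, hp, hq]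
  | monomial k p =>
    have hXt : pderiv (ι j) (X t : MvPolynomial τ R) = 0 :=
      pderiv_X_of_ne fun h => ht ⟨j, h.symm⟩
    rw [coeffPDeriv_monomial, joinVar_monomial, joinVar_monomial, pderiv_mul, pderiv_rename hι,
      pderiv_pow, hXt, mul_zero, mul_zero, add_zero]

theorem pderiv_joinVar_self [CommSemiring R] {ι : σ → τ} {t : τ} (ht : t ∉ Set.range ι)
    (P : (MvPolynomial σ R)[X]) :
    pderiv t (joinVar ι t P) = joinVar ι t P.derivative := by
  classical
  induction P using Polynomial.induction_on' with
  | add p q hp hq => simp only [map_add, hp, hq]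
  | monomial k p =>
    have hp : pderiv t (rename ι p) = 0 := by
      refine pderiv_eq_zero_of_notMem_vars fun hmem => ht ?_
      obtain ⟨j, -, hj⟩ := Finset.mem_image.1 (vars_rename ι p hmem)
      exact ⟨j, hj⟩
    rw [Polynomial.derivative_monomial, joinVar_monomial, joinVar_monomial, pderiv_mul, hp,
      pderiv_pow, pderiv_X_self]
    simp only [map_mul, map_natCast]
    ring

end JoinVar

theorem exists_eq_C_of_pderiv_eq_zero {σ R : Type*} [CommSemiring R] [NoZeroDivisors R] [CharZero R]
    {p : MvPolynomial σ R} (h : ∀ i, pderiv i p = 0) : ∃ c, p = C c := by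
  classical
  refine ⟨p.coeff 0, MvPolynomial.ext _ _ fun e => ?_⟩
  rw [coeff_C]
  split_ifs with he
  · rw [he]
  obtain ⟨i, hi⟩ : ∃ i, e i ≠ 0 := Finsupp.ne_iff.1 (Ne.symm he)
  have hle : Finsupp.single i 1 ≤ e := Finsupp.single_le_iff.2 (Nat.one_le_iff_ne_zero.2 hi)
  have hcoeff := coeff_pderiv (i := i) p (e - Finsupp.single i 1)
  rw [h i, coeff_zero, tsub_add_cancel_of_le hle] at hcoeff
  exact (mul_eq_zero.1 hcoeff.symm).resolve_right (Nat.cast_add_one_ne_zero _)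

section HalfSpace

variable {n m : ℕ} {br : (Fin n → ℝ) →ₗ[ℝ] (Fin n → ℝ) →ₗ[ℝ] (Fin m → ℝ)}
  {P : (MvPolynomial (Fin n ⊕ Fin m) ℝ)[X]} {b₁ b₀ : ℝ}

/-- The polynomial on `V × Z × ℝ` whose expansion in powers of `t` is `P`. -/
def halfSpacePoly (P : (MvPolynomial (Fin n ⊕ Fin m) ℝ)[X]) :
    MvPolynomial (Fin n ⊕ Fin m ⊕ Unit) ℝ :=
  joinVar (Sum.map id Sum.inl) (Sum.inr (Sum.inr ())) P

theorem time_notMem_range :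
    Sum.inr (Sum.inr ()) ∉
      Set.range (Sum.map id Sum.inl : Fin n ⊕ Fin m → Fin n ⊕ Fin m ⊕ Unit) := by
  rintro ⟨_ | _, h⟩ <;> simp at h

theorem pderiv_halfSpacePoly (j : Fin n ⊕ Fin m) :
    pderiv (Sum.map id Sum.inl j) (halfSpacePoly P) = halfSpacePoly (coeffPDeriv j P) :=
  pderiv_joinVar (Function.injective_id.sumMap Sum.inl_injective) time_notMem_range j P

theorem pderiv_time_halfSpacePoly :
    pderiv (Sum.inr (Sum.inr ())) (halfSpacePoly P) = halfSpacePoly P.derivative :=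
  pderiv_joinVar_self time_notMem_range P

theorem evp_halfSpacePoly (v : Fin n → ℝ) (z : Fin m → ℝ) (t : ℝ) :
    evp (halfSpacePoly P) v z t = (P.map (eval (Sum.elim v z))).eval t := by
  have hpoint : Sum.elim v (Sum.elim z fun _ : Unit => t) ∘ Sum.map id Sum.inl = Sum.elim v z := by
    ext (i | α) <;> rfl
  rw [evp, halfSpacePoly, eval_joinVar, hpoint]
  rfl

/-- The restriction to the vertical line over `(v, z)` of the derivative `∂_{f_α}G` of the
polynomial `G` with expansion `P`. -/
def centralFiber (P : (MvPolynomial (Fin n ⊕ Fin m) ℝ)[X]) (v : Fin n → ℝ) (z : Fin m → ℝ)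
    (α : Fin m) : ℝ[X] :=
  (coeffPDeriv (Sum.inr α) P).map (eval (Sum.elim v z))

/-- The restriction to the vertical line over `(v, z)` of the derivative
`∂_{eᵢ}G - ½ ∂_{[eᵢ, v]}G` of the polynomial `G` with expansion `P`, where `[·, ·] = br`. -/
def horizontalFiber (br : (Fin n → ℝ) →ₗ[ℝ] (Fin n → ℝ) →ₗ[ℝ] (Fin m → ℝ))
    (P : (MvPolynomial (Fin n ⊕ Fin m) ℝ)[X]) (v : Fin n → ℝ) (z : Fin m → ℝ) (i : Fin n) : ℝ[X] :=
  (coeffPDeriv (Sum.inl i) P).map (eval (Sum.elim v z))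
    - Polynomial.C (1 / 2) * ∑ α, Polynomial.C (br (Pi.single i 1) v α) * centralFiber P v z α

theorem coeff_centralFiber (v : Fin n → ℝ) (z : Fin m → ℝ) (α : Fin m) (k : ℕ) :
    (centralFiber P v z α).coeff k = eval (Sum.elim v z) (pderiv (Sum.inr α) (P.coeff k)) := by
  rw [centralFiber, Polynomial.coeff_map, coeff_coeffPDeriv]

theorem coeff_horizontalFiber (v : Fin n → ℝ) (z : Fin m → ℝ) (i : Fin n) (k : ℕ) :
    (horizontalFiber br P v z i).coeff k = eval (Sum.elim v z) (pderiv (Sum.inl i) (P.coeff k))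
      - 1 / 2 * ∑ α, br (Pi.single i 1) v α * (centralFiber P v z α).coeff k := by
  simp only [horizontalFiber, Polynomial.coeff_sub, Polynomial.coeff_map, coeff_coeffPDeriv,
    Polynomial.coeff_C_mul, Polynomial.finsetSum_coeff]

theorem evp_pderiv_central (v : Fin n → ℝ) (z : Fin m → ℝ) (t : ℝ) (α : Fin m) :
    evp (pderiv (Sum.inr (Sum.inl α)) (halfSpacePoly P)) v z t = (centralFiber P v z α).eval t := by
  rw [centralFiber, ← evp_halfSpacePoly, ← pderiv_halfSpacePoly, Sum.map_inr]

theorem evp_pderiv_time (v : Fin n → ℝ) (z : Fin m → ℝ) (t : ℝ) :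
    evp (pderiv (Sum.inr (Sum.inr ())) (halfSpacePoly P)) v z t
      = (P.map (eval (Sum.elim v z))).derivative.eval t := by
  rw [pderiv_time_halfSpacePoly, evp_halfSpacePoly, Polynomial.derivative_map]

theorem evp_horizontal (v : Fin n → ℝ) (z : Fin m → ℝ) (t : ℝ) (i : Fin n) :
    evp (pderiv (Sum.inl i) (halfSpacePoly P)) v z t - 1 / 2 * ∑ α, br (Pi.single i 1) v α *
        evp (pderiv (Sum.inr (Sum.inl α)) (halfSpacePoly P)) v z t
      = (horizontalFiber br P v z i).eval t := by
  have hbase : evp (pderiv (Sum.inl i) (halfSpacePoly P)) v z t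
      = ((coeffPDeriv (Sum.inl i) P).map (eval (Sum.elim v z))).eval t := by
    rw [← evp_halfSpacePoly, ← pderiv_halfSpacePoly, Sum.map_inl, id]
  simp only [hbase, evp_pderiv_central, horizontalFiber, Polynomial.eval_sub, Polynomial.eval_mul,
    Polynomial.eval_C, Polynomial.eval_finsetSum]

namespace Transnormal

theorem sum_sq_fiber_eq_verticalPart (h : Transnormal n m br (halfSpacePoly P) b₁ b₀)
    (v : Fin n → ℝ) (z : Fin m → ℝ) :
    ∑ i, horizontalFiber br P v z i ^ 2 + Polynomial.X * ∑ α, centralFiber P v z α ^ 2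
      = verticalPart b₁ b₀ (P.map (eval (Sum.elim v z))) := by
  refine Polynomial.eq_of_infinite_eval_eq _ _ ((Set.Ioi_infinite (0 : ℝ)).mono fun t ht => ?_)
  have ht0 : t ≠ 0 := (Set.mem_Ioi.1 ht).ne'
  have hpoint := h v z t ht
  simp only [evp_horizontal] at hpoint
  simp only [evp_pderiv_central, evp_pderiv_time, evp_halfSpacePoly] at hpoint
  simp only [Set.mem_ofPred_eq, verticalPart, Polynomial.eval_add, Polynomial.eval_sub,
    Polynomial.eval_mul, Polynomial.eval_pow, Polynomial.eval_finsetSum, Polynomial.eval_X,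
    Polynomial.eval_C, Polynomial.eval_ofNat]
  field_simp at hpoint
  linear_combination hpoint

variable {d : ℕ}

theorem natDegree_fiber_le (h : Transnormal n m br (halfSpacePoly P) b₁ b₀)
    (hP : P.natDegree ≤ d + 1) (v : Fin n → ℝ) (z : Fin m → ℝ) :
    (∀ i, (horizontalFiber br P v z i).natDegree ≤ d) ∧
      ∀ α, (centralFiber P v z α).natDegree ≤ d := by
  apply natDegree_le_of_natDegree_sum_sq_add_X_mul_sum_sq_le
  rw [h.sum_sq_fiber_eq_verticalPart]
  exact natDegree_verticalPart_le (Polynomial.natDegree_map_le.trans hP)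

theorem pderiv_coeff_eq_zero (h : Transnormal n m br (halfSpacePoly P) b₁ b₀)
    (hP : P.natDegree ≤ d + 1) (j : Fin n ⊕ Fin m) : pderiv j (P.coeff (d + 1)) = 0 := by
  refine MvPolynomial.funext fun w => ?_
  obtain ⟨v, z, rfl⟩ : ∃ v z, Sum.elim v z = w := ⟨_, _, Sum.elim_comp_inl_inr w⟩
  obtain ⟨hhor, hcen⟩ := h.natDegree_fiber_le hP v z
  have hcen_top : ∀ α, (centralFiber P v z α).coeff (d + 1) = 0 := fun α =>
    Polynomial.coeff_eq_zero_of_natDegree_lt (Nat.lt_succ_of_le (hcen α))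
  rw [map_zero]
  rcases j with i | α
  · have hhor_top : (horizontalFiber br P v z i).coeff (d + 1) = 0 :=
      Polynomial.coeff_eq_zero_of_natDegree_lt (Nat.lt_succ_of_le (hhor i))
    simpa only [coeff_horizontalFiber, hcen_top, mul_zero, Finset.sum_const_zero, sub_zero]
      using hhor_top
  · rw [← coeff_centralFiber, hcen_top]

theorem coeff_eq_zero (h : Transnormal n m br (halfSpacePoly P) b₁ b₀)
    (hP : P.natDegree ≤ d + 1) (hd : 2 ≤ d) : P.coeff (d + 1) = 0 := by
  refine MvPolynomial.funext fun w => ?_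
  obtain ⟨v, z, rfl⟩ : ∃ v z, Sum.elim v z = w := ⟨_, _, Sum.elim_comp_inl_inr w⟩
  have hnonneg : 0 ≤ (verticalPart b₁ b₀ (P.map (eval (Sum.elim v z)))).leadingCoeff := by
    rw [← h.sum_sq_fiber_eq_verticalPart]
    exact leadingCoeff_add_nonneg (leadingCoeff_sum_sq_nonneg _ _)
      (leadingCoeff_X_mul_sum_sq_nonneg _ _)
  rw [map_zero, ← Polynomial.coeff_map]
  exact coeff_eq_zero_of_leadingCoeff_verticalPart_nonneg hnonneg
    (Polynomial.natDegree_map_le.trans hP) hd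

theorem natDegree_le_two (h : Transnormal n m br (halfSpacePoly P) b₁ b₀) : P.natDegree ≤ 2 := by
  by_contra! hlt
  obtain ⟨d, hd⟩ := Nat.exists_eq_add_of_lt hlt
  have hlead : P.leadingCoeff = 0 := by
    rw [Polynomial.leadingCoeff, hd]
    exact h.coeff_eq_zero hd.le (by omega)
  rw [Polynomial.leadingCoeff_eq_zero.1 hlead, Polynomial.natDegree_zero] at hlt
  omega

theorem exists_leadingCoeff_eq_C (h : Transnormal n m br (halfSpacePoly P) b₁ b₀)
    (hP : 1 ≤ P.natDegree) : ∃ c, P.leadingCoeff = C c := by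
  obtain ⟨d, hd⟩ := Nat.exists_eq_add_of_le' hP
  rw [Polynomial.leadingCoeff, hd]
  exact exists_eq_C_of_pderiv_eq_zero (h.pderiv_coeff_eq_zero hd.le)

end Transnormal

end HalfSpace

theorem coeff_sum_range_monomial {R : Type*} [Semiring R] (r : ℕ) (c : ℕ → R) :
    (∑ k ∈ Finset.range (r + 1), Polynomial.monomial k (c k)).coeff r = c r := by
  simp [Polynomial.finsetSum_coeff, Polynomial.coeff_monomial]

theorem natDegree_sum_range_monomial {R : Type*} [Semiring R] {r : ℕ} {c : ℕ → R}
    (hc : c r ≠ 0) :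
    (∑ k ∈ Finset.range (r + 1), Polynomial.monomial k (c k)).natDegree = r := by
  refine Polynomial.natDegree_eq_of_le_of_coeff_ne_zero
    (Polynomial.natDegree_sum_le_of_forall_le _ _ fun k hk => ?_) ?_
  · exact (Polynomial.natDegree_monomial_le _).trans (Finset.mem_range_succ_iff.1 hk)
  · rwa [coeff_sum_range_monomial]

theorem stmt_4_general {n m : ℕ} {br : (Fin n → ℝ) →ₗ[ℝ] (Fin n → ℝ) →ₗ[ℝ] (Fin m → ℝ)}
    {G : MvPolynomial (Fin n ⊕ Fin m ⊕ Unit) ℝ} {r : ℕ}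
    {Gk : ℕ → MvPolynomial (Fin n ⊕ Fin m) ℝ} (hGr : Gk r ≠ 0)
    (hdecomp : G = ∑ k ∈ Finset.range (r + 1),
      rename (Sum.map id Sum.inl : Fin n ⊕ Fin m → Fin n ⊕ Fin m ⊕ Unit) (Gk k)
        * X (Sum.inr (Sum.inr ())) ^ k)
    {b₁ b₀ : ℝ} (htrans : Transnormal n m br G b₁ b₀) :
    r ≤ 2 ∧ (1 ≤ r → ∃ c : ℝ, Gk r = C c) := by
  set P : (MvPolynomial (Fin n ⊕ Fin m) ℝ)[X] :=
    ∑ k ∈ Finset.range (r + 1), Polynomial.monomial k (Gk k) with hP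
  have hG : G = halfSpacePoly P := by
    simp only [hdecomp, hP, halfSpacePoly, map_sum, joinVar_monomial]
  have hdeg : P.natDegree = r := natDegree_sum_range_monomial hGr
  have hlead : P.leadingCoeff = Gk r := by
    rw [Polynomial.leadingCoeff, hdeg, hP, coeff_sum_range_monomial]
  rw [hG] at htrans
  rw [← hlead, ← hdeg]
  exact ⟨htrans.natDegree_le_two, htrans.exists_leadingCoeff_eq_C⟩

/-- Let `G = Σ_{k=0}^r G_k(v,z)·tᵏ` (with `G_r ≠ 0`, so `r` is the `t`-degree of
`G`) be a polynomial not divisible by `t` such that `F = G/t` satisfies the transnormality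
condition for some constants `b₁, b₀`.  Then `r ≤ 2`, and if `r ≥ 1` then `G_r` is a constant
polynomial. -/
theorem stmt_4 (n m : ℕ)
    (J : (Fin m → ℝ) →ₗ[ℝ] (Fin n → ℝ) →ₗ[ℝ] (Fin n → ℝ))
    (hJ : ∀ (z : Fin m → ℝ) (v : Fin n → ℝ), dotR (J z v) (J z v) = dotR z z * dotR v v)
    (br : (Fin n → ℝ) →ₗ[ℝ] (Fin n → ℝ) →ₗ[ℝ] (Fin m → ℝ))
    (hbr : ∀ (v₁ v₂ : Fin n → ℝ) (z : Fin m → ℝ), dotR (br v₁ v₂) z = dotR (J z v₁) v₂)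
    (G : MvPolynomial (Fin n ⊕ Fin m ⊕ Unit) ℝ)
    (hGdiv : ¬ (MvPolynomial.X (Sum.inr (Sum.inr ())) ∣ G))
    (r : ℕ) (Gk : ℕ → MvPolynomial (Fin n ⊕ Fin m) ℝ)
    (hGr : Gk r ≠ 0)
    (hdecomp : G = ∑ k ∈ Finset.range (r + 1),
      MvPolynomial.rename (Sum.map id Sum.inl : Fin n ⊕ Fin m → Fin n ⊕ Fin m ⊕ Unit) (Gk k)
        * MvPolynomial.X (Sum.inr (Sum.inr ())) ^ k)
    (b₁ b₀ : ℝ) (htrans : Transnormal n m br G b₁ b₀) :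
    r ≤ 2 ∧ (1 ≤ r → ∃ c : ℝ, Gk r = MvPolynomial.C c) := by
  exact stmt_4_general hGr hdecomp htrans
end
end

section
/- Let V be a finite-dimensional real inner product space and b₁ ∈ ℝ. If G₁ : V → ℝ is a polynomial function satisfying ‖∇G₁(v)‖² = 2·G₁(v) + b₁ for all v ∈ V, then there exist a linear subspace W ⊆ V with orthogonal projection Π_W : V → W and a vector v₀ ∈ W such that G₁(v) = ½·(‖Π_W(v − v₀)‖² − b₁) for all v ∈ V (the case W = {0} giving the constant solution G₁ ≡ −b₁/2). -/
noncomputable section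

open MvPolynomial

/-!
The leading coefficients of squares cannot cancel in a sum, so a sum of squares of polynomials has
at least twice the degree of each summand. Applied to `‖∇G‖² = 2G + b`, this gives
`2 (deg G - 1) ≤ deg G`, so `deg G ≤ 2`, the Hessian `H` is constant and `∇G(v) = ∇G(0) + H v`.
Differentiating the equation gives `H ∇G(v) = ∇G(v)` for all `v`, so that `H ∇G(0) = ∇G(0)` and
`H² = H`. Hence `H` is an orthogonal projection and `∇G(v) = H (v - v₀)` with `v₀ = -∇G(0)`;
substituting this back into the equation yields `2G(v) + b = ‖H (v - v₀)‖²`.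
-/

open scoped Matrix

section TotalDegree

variable {σ R : Type*}

section CommSemiring

variable [CommSemiring R]

lemma totalDegree_pderiv_le (i : σ) (p : MvPolynomial σ R) :
    (pderiv i p).totalDegree ≤ p.totalDegree - 1 := by
  refine Finset.sup_le fun m hm => ?_
  rw [mem_support_iff, coeff_pderiv] at hm
  have hdeg : (m + Finsupp.single i 1).degree ≤ p.totalDegree :=
    le_totalDegree (mem_support_iff.2 (left_ne_zero_of_mul hm))
  rw [map_add, Finsupp.degree_single] at hdeg
  exact Nat.le_sub_one_of_lt hdeg

lemma totalDegree_le_succ_of_totalDegree_pderiv_le [NoZeroDivisors R] [CharZero R]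
    {p : MvPolynomial σ R} {d : ℕ} (h : ∀ i, (pderiv i p).totalDegree ≤ d) :
    p.totalDegree ≤ d + 1 := by
  refine Finset.sup_le fun m hm => ?_
  obtain rfl | hm0 := eq_or_ne m 0
  · simp
  obtain ⟨i, hi⟩ := Finsupp.ne_iff.1 hm0
  obtain ⟨s, rfl⟩ : ∃ s, m = s + Finsupp.single i 1 :=
    ⟨_, (Finsupp.sub_add_single_one_cancel hi).symm⟩
  have hs : s ∈ (pderiv i p).support := by
    rw [mem_support_iff, coeff_pderiv]
    exact mul_ne_zero (mem_support_iff.1 hm) (Nat.cast_add_one_ne_zero _)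
  have hsdeg : s.degree ≤ d := (le_totalDegree hs).trans (h i)
  calc (s + Finsupp.single i 1).degree = s.degree + 1 := by
        rw [map_add, Finsupp.degree_single]
    _ ≤ d + 1 := by gcongr

lemma eq_C_add_sum_of_totalDegree_le_one [Fintype σ] {p : MvPolynomial σ R}
    (hp : p.totalDegree ≤ 1) :
    p = C (coeff 0 p) + ∑ i, C (coeff 0 (pderiv i p)) * X i := by
  classical
  ext m
  simp only [coeff_add, coeff_C, coeff_sum, coeff_C_mul, coeff_X, coeff_pderiv]
  obtain hm | hm | hm : m.degree = 0 ∨ m.degree = 1 ∨ 1 < m.degree := by lia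
  · simp [(Finsupp.degree_eq_zero_iff m).1 hm]
  · obtain ⟨j, rfl⟩ := (Finsupp.sum_eq_one_iff m).1 hm
    simp [Finsupp.single_left_inj, eq_comm (a := (0 : σ →₀ ℕ))]
  · have hcoeff : coeff m p = 0 := coeff_eq_zero_of_totalDegree_lt (hp.trans_lt hm)
    have h0 : 0 ≠ m := by rintro rfl; simp at hm
    have h1 (i : σ) : Finsupp.single i 1 ≠ m := by rintro rfl; simp at hm
    simp [hcoeff, h0, h1]

lemma eval_eq_of_totalDegree_le_one [Fintype σ] {p : MvPolynomial σ R}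
    (hp : p.totalDegree ≤ 1) (v : σ → R) :
    eval v p = eval 0 p + ∑ i, eval 0 (pderiv i p) * v i := by
  conv_lhs => rw [eq_C_add_sum_of_totalDegree_le_one hp]
  simp [constantCoeff_eq, eval_zero]

lemma pderiv_comm (i j : σ) (p : MvPolynomial σ R) :
    pderiv i (pderiv j p) = pderiv j (pderiv i p) := by
  obtain rfl | hij := eq_or_ne i j
  · rfl
  ext m
  simp [coeff_pderiv, hij, hij.symm, add_right_comm, mul_right_comm]

end CommSemiring

section LinearOrderedCommRing

variable {ι : Type*} [CommRing R] [LinearOrder R] [IsStrictOrderedRing R]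

lemma two_mul_totalDegree_le_totalDegree_sum_sq {s : Finset ι} (q : ι → MvPolynomial σ R)
    {i : ι} (hi : i ∈ s) :
    2 * (q i).totalDegree ≤ (∑ j ∈ s, q j ^ 2).totalDegree := by
  obtain ⟨_, _⟩ := exists_wellFoundedGT σ
  let m : MonomialOrder σ := MonomialOrder.degLex
  obtain ⟨k, hk, hmax⟩ := s.exists_max_image (fun j => m.toSyn (m.degree (q j))) ⟨i, hi⟩
  have hle : (q i).totalDegree ≤ (q k).totalDegree := degLex_totalDegree_monotone (hmax i hi)
  obtain hk0 | hk0 := eq_or_ne (q k) 0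
  · simp [Nat.le_zero.1 (hk0 ▸ hle)]
  set d := m.degree (q k)
  have hcoeff : coeff (d + d) (∑ j ∈ s, q j ^ 2) = ∑ j ∈ s, coeff d (q j) ^ 2 := by
    rw [coeff_sum]
    refine Finset.sum_congr rfl fun j hj => ?_
    rw [pow_two, pow_two, m.coeff_mul_of_add_of_degree_le (hmax j hj) (hmax j hj)]
  have hpos : 0 < ∑ j ∈ s, coeff d (q j) ^ 2 :=
    Finset.sum_pos' (fun j _ => sq_nonneg _)
      ⟨k, hk, sq_pos_of_ne_zero (m.coeff_degree_ne_zero_iff.2 hk0)⟩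
  calc 2 * (q i).totalDegree ≤ 2 * (q k).totalDegree := by gcongr
    _ = (d + d).degree := by rw [← degree_degLexDegree, map_add, two_mul]
    _ ≤ (∑ j ∈ s, q j ^ 2).totalDegree :=
      le_totalDegree (mem_support_iff.2 (hcoeff ▸ hpos.ne'))

end LinearOrderedCommRing

end TotalDegree

section GradientHessian

variable {σ R : Type*} [CommSemiring R]

/-- The gradient at `v` of the function given by the polynomial `p`, in coordinates. -/
def polyGradient (p : MvPolynomial σ R) (v : σ → R) : σ → R :=
  fun i => eval v (pderiv i p)

/-- The Hessian matrix at `v` of the function given by the polynomial `p`. -/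
def polyHessian (p : MvPolynomial σ R) (v : σ → R) : Matrix σ σ R :=
  Matrix.of fun i j => eval v (pderiv i (pderiv j p))

lemma isSymm_polyHessian (p : MvPolynomial σ R) (v : σ → R) : (polyHessian p v).IsSymm :=
  Matrix.IsSymm.ext fun i j => congrArg (eval v) (pderiv_comm j i p)

lemma polyHessian_eq_of_totalDegree_le_two {p : MvPolynomial σ R} (hp : p.totalDegree ≤ 2)
    (v w : σ → R) : polyHessian p v = polyHessian p w := by
  ext i j
  have hdeg : (pderiv i (pderiv j p)).totalDegree = 0 := by
    have hi := totalDegree_pderiv_le i (pderiv j p)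
    have hj := totalDegree_pderiv_le j p
    lia
  change eval v (pderiv i (pderiv j p)) = eval w (pderiv i (pderiv j p))
  rw [totalDegree_eq_zero_iff_eq_C.1 hdeg, eval_C, eval_C]

lemma polyGradient_eq_of_totalDegree_le_two [Fintype σ] {p : MvPolynomial σ R}
    (hp : p.totalDegree ≤ 2) (v : σ → R) :
    polyGradient p v = polyGradient p 0 + polyHessian p 0 *ᵥ v := by
  ext i
  have hdeg : (pderiv i p).totalDegree ≤ 1 := by grw [totalDegree_pderiv_le, hp]
  rw [← (isSymm_polyHessian p 0).eq]
  exact eval_eq_of_totalDegree_le_one hdeg v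

end GradientHessian

section GradientEquation

variable {σ R : Type*} [Fintype σ] [CommRing R] {p : MvPolynomial σ R} {b : R}

lemma polyHessian_mulVec_polyGradient [NoZeroDivisors R] [CharZero R]
    (hp : ∑ i, pderiv i p ^ 2 = 2 * p + C b) (v : σ → R) :
    polyHessian p v *ᵥ polyGradient p v = polyGradient p v := by
  ext i
  have hderiv : 2 * ∑ j, pderiv i (pderiv j p) * pderiv j p = 2 * pderiv i p := by
    have h := congrArg (pderiv i) hp
    simp only [two_mul p, map_sum, map_add, pderiv_pow, pderiv_C, add_zero] at h
    rw [two_mul (pderiv i p), ← h, Finset.mul_sum]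
    exact Finset.sum_congr rfl fun j _ => by push_cast; ring
  have heval := congrArg (eval v) (mul_left_cancel₀ two_ne_zero hderiv)
  simp only [map_sum, map_mul] at heval
  exact heval

variable [LinearOrder R] [IsStrictOrderedRing R]

lemma totalDegree_le_two_of_sum_sq_pderiv_eq (hp : ∑ i, pderiv i p ^ 2 = 2 * p + C b) :
    p.totalDegree ≤ 2 := by
  have hrhs : (2 * p + C b).totalDegree ≤ p.totalDegree := by
    rw [two_mul]
    grw [totalDegree_add, totalDegree_add, totalDegree_C]
    simp
  have hpderiv (i : σ) : (pderiv i p).totalDegree ≤ p.totalDegree / 2 := by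
    have hsq := two_mul_totalDegree_le_totalDegree_sum_sq (pderiv · p) (Finset.mem_univ i)
    rw [hp] at hsq
    lia
  have := totalDegree_le_succ_of_totalDegree_pderiv_le hpderiv
  lia

lemma polyHessian_zero_mulVec_mulVec (hp : ∑ i, pderiv i p ^ 2 = 2 * p + C b) (v : σ → R) :
    polyHessian p 0 *ᵥ (polyHessian p 0 *ᵥ v) = polyHessian p 0 *ᵥ v := by
  have hdeg := totalDegree_le_two_of_sum_sq_pderiv_eq hp
  have h := polyHessian_mulVec_polyGradient hp v
  rw [polyHessian_eq_of_totalDegree_le_two hdeg v 0, polyGradient_eq_of_totalDegree_le_two hdeg v,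
    Matrix.mulVec_add, polyHessian_mulVec_polyGradient hp 0] at h
  exact add_left_cancel h

lemma polyGradient_eq_polyHessian_zero_mulVec (hp : ∑ i, pderiv i p ^ 2 = 2 * p + C b)
    (v : σ → R) : polyGradient p v = polyHessian p 0 *ᵥ (v + polyGradient p 0) := by
  rw [polyGradient_eq_of_totalDegree_le_two (totalDegree_le_two_of_sum_sq_pderiv_eq hp) v,
    Matrix.mulVec_add, polyHessian_mulVec_polyGradient hp 0, add_comm]

theorem stmt_6_general (h : ∀ v : σ → R, ∑ i, eval v (pderiv i p) ^ 2 = 2 * eval v p + b) :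
    ∃ P : (σ → R) →ₗ[R] (σ → R), P ∘ₗ P = P ∧ (∀ u w, P u ⬝ᵥ w = u ⬝ᵥ P w) ∧
      ∃ v₀, P v₀ = v₀ ∧ ∀ v, 2 * eval v p = P (v - v₀) ⬝ᵥ P (v - v₀) - b := by
  have hp : ∑ i, pderiv i p ^ 2 = 2 * p + C b := MvPolynomial.funext fun v => by simpa using h v
  refine ⟨(polyHessian p 0).mulVecLin, ?_, fun u w => ?_, -polyGradient p 0, ?_, fun v => ?_⟩
  · exact LinearMap.ext (polyHessian_zero_mulVec_mulVec hp)
  · rw [Matrix.mulVecLin_apply, Matrix.mulVecLin_apply, Matrix.dotProduct_mulVec,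
      ← Matrix.mulVec_transpose, (isSymm_polyHessian p 0).eq]
  · rw [map_neg, Matrix.mulVecLin_apply, polyHessian_mulVec_polyGradient hp 0]
  · rw [sub_neg_eq_add, Matrix.mulVecLin_apply, ← polyGradient_eq_polyHessian_zero_mulVec hp v,
      eq_sub_iff_add_eq, ← h v]
    exact Finset.sum_congr rfl fun i _ => pow_two _

end GradientEquation

/-- Let `V = ℝⁿ` (a finite-dimensional real inner product space) and `b₁ ∈ ℝ`.
If the polynomial function `G₁` on `V` (given by the polynomial `p`) satisfies
`‖∇G₁(v)‖² = 2·G₁(v) + b₁` for all `v` (the gradient having components `∂ᵢp`), then there are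
an orthogonal projection `Π_W` onto a linear subspace `W ⊆ V` and `w₀ ∈ W` such that
`G₁(v) = ½(‖Π_W(v − v₀)‖² − b₁)` for all `v`. -/
theorem stmt_6 (n : ℕ) (b₁ : ℝ) (p : MvPolynomial (Fin n) ℝ)
    (h : ∀ v : Fin n → ℝ,
      (∑ i : Fin n, (MvPolynomial.eval v (pderiv i p)) ^ 2) = 2 * MvPolynomial.eval v p + b₁) :
    ∃ Pw : (Fin n → ℝ) →ₗ[ℝ] (Fin n → ℝ), Pw ∘ₗ Pw = Pw ∧
      (∀ u w : Fin n → ℝ, dotR (Pw u) w = dotR u (Pw w)) ∧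
      ∃ v₀ : Fin n → ℝ, Pw v₀ = v₀ ∧
        ∀ v : Fin n → ℝ,
          MvPolynomial.eval v p = (1 / 2) * (dotR (Pw (v - v₀)) (Pw (v - v₀)) - b₁) := by
  obtain ⟨P, hidem, hsymm, v₀, hv₀, hP⟩ := stmt_6_general h
  refine ⟨P, hidem, hsymm, v₀, hv₀, fun v => ?_⟩
  change _ = 1 / 2 * (P (v - v₀) ⬝ᵥ P (v - v₀) - b₁)
  linear_combination (1 / 2) * hP v
end
end

section
/- Let V and Z be finite-dimensional real inner product spaces, W ⊆ V a linear subspace with orthogonal projection Π_W, and v₀ ∈ V. Let B : V → End(Z) be a map such that B(v) is self-adjoint for every v ∈ V and such that the matrix entries of B(v) with respect to some basis of Z are polynomial functions of v. If the directional derivative of B at v in the direction Π_W(v − v₀) satisfies ∂_{Π_W(v−v₀)}B(v) = 2·B(v) − 2·B(v)² for all v ∈ V, then B is a constant map whose value is the orthogonal projection of Z onto some linear subspace Y ⊆ Z. -/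
noncomputable section

open MvPolynomial

/-!
Over a formally real ring the leading terms in a sum of squares cannot cancel, so by symmetry the
diagonal entry `(B²)_{αα} = ∑_γ b_{αγ}²` has degree at least `2 deg b_{αγ}` for every `γ`.
Differentiating along an affine vector field does not raise degrees, so the equation gives
`2 deg b_{αγ} ≤ deg b_{αα}`. Taking `γ = α` shows `deg b_{αα} = 0`, hence `deg b_{αγ} = 0` for
all `γ`. Thus `B` is constant, its derivative vanishes, and the equation becomes `B = B²`.
-/

section SumOfSquares

theorem eq_zero_of_sum_mul_self_eq_zero {ι R : Type*} [NonUnitalNonAssocSemiring R]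
    [IsFormallyReal R] {s : Finset ι} {f : ι → R}
    (h : ∑ j ∈ s, f j * f j = 0) {i : ι} (hi : i ∈ s) : f i = 0 := by
  classical
  rw [← Finset.add_sum_erase s _ hi] at h
  have hfi : f i * f i = 0 :=
    IsFormallyReal.eq_zero_of_add_right (.mul_self _) (.sum_mul_self _ _) h
  by_contra hne
  exact IsFormallyReal.not_isSumNonzeroSq_zero (hfi ▸ IsSumNonzeroSq.sq hne)

theorem charZero_of_isFormallyReal (R : Type*) [NonAssocRing R] [Nontrivial R]
    [IsFormallyReal R] : CharZero R := by
  refine charZero_of_inj_zero fun n hn ↦ ?_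
  have hsum : ∑ _j ∈ Finset.range n, (1 : R) * 1 = 0 := by simpa using hn
  by_contra hne
  exact one_ne_zero (α := R) <|
    eq_zero_of_sum_mul_self_eq_zero hsum (Finset.mem_range.mpr (Nat.pos_of_ne_zero hne))

variable {ι R σ : Type*} [CommSemiring R] [IsFormallyReal R]

open scoped MonomialOrder in
theorem degree_add_degree_le_degree_sum_mul_self (m : MonomialOrder σ) {s : Finset ι}
    (p : ι → MvPolynomial σ R) {i : ι} (hi : i ∈ s) :
    m.degree (p i) + m.degree (p i) ≼[m] m.degree (∑ j ∈ s, p j * p j) := by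
  obtain ⟨k, hk, hmax⟩ := s.exists_max_image (fun j ↦ m.toSyn (m.degree (p j))) ⟨i, hi⟩
  set δ := m.degree (p k) with hδ
  have hcoeff : coeff (δ + δ) (∑ j ∈ s, p j * p j) = ∑ j ∈ s, coeff δ (p j) * coeff δ (p j) := by
    rw [coeff_sum]
    exact Finset.sum_congr rfl fun j hj ↦
      m.coeff_mul_of_add_of_degree_le (hmax j hj) (hmax j hj)
  have hle : m.degree (p i) + m.degree (p i) ≼[m] δ + δ := by
    simpa only [map_add] using add_le_add (hmax i hi) (hmax i hi)
  by_cases hzero : coeff (δ + δ) (∑ j ∈ s, p j * p j) = 0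
  · have hpk : p k = 0 := m.coeff_degree_eq_zero_iff.mp <|
      eq_zero_of_sum_mul_self_eq_zero (hcoeff.symm.trans hzero) hk
    have hδ0 : δ = 0 := by rw [hδ, hpk, m.degree_zero]
    exact hle.trans (by simp [hδ0])
  · exact hle.trans (m.le_degree (mem_support_iff.mpr hzero))

theorem two_mul_totalDegree_le_totalDegree_sum_mul_self {s : Finset ι}
    (p : ι → MvPolynomial σ R) {i : ι} (hi : i ∈ s) :
    2 * (p i).totalDegree ≤ (∑ j ∈ s, p j * p j).totalDegree := by
  obtain ⟨_, _⟩ := exists_wellFoundedGT σ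
  have h : (MonomialOrder.degLex.degree (p i) + MonomialOrder.degLex.degree (p i)).degree ≤
      (MonomialOrder.degLex.degree (∑ j ∈ s, p j * p j)).degree :=
    Finsupp.DegLex.monotone_degree <|
      degree_add_degree_le_degree_sum_mul_self MonomialOrder.degLex p hi
  rwa [map_add, degree_degLexDegree, degree_degLexDegree, ← two_mul] at h

end SumOfSquares

section Derivation

variable {R σ : Type*} [CommSemiring R]

theorem totalDegree_derivation_le (D : Derivation R (MvPolynomial σ R) (MvPolynomial σ R)) {e : ℕ}
    (hD : ∀ i, (D (X i)).totalDegree ≤ e + 1) (p : MvPolynomial σ R) :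
    (D p).totalDegree ≤ p.totalDegree + e := by
  have hDX : D = mkDerivation R fun i ↦ D (X i) := derivation_ext fun i ↦ by simp
  conv_lhs => rw [p.as_sum, map_sum]
  refine totalDegree_finsetSum_le fun s hs ↦ ?_
  have hdegs : s.degree ≤ p.totalDegree := le_totalDegree hs
  rw [hDX, mkDerivation_monomial]
  refine (totalDegree_smul_le _ _).trans <| totalDegree_finsetSum_le fun i hi ↦ ?_
  have hdeg_sub : (s - Finsupp.single i 1).degree + 1 = s.degree := by
    have hle : Finsupp.single i 1 ≤ s :=
      Finsupp.single_le_iff.mpr (Nat.one_le_iff_ne_zero.mpr (Finsupp.mem_support_iff.mp hi))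
    simpa only [map_add, Finsupp.degree_single] using
      congrArg Finsupp.degree (tsub_add_cancel_of_le hle)
  calc (monomial (s - Finsupp.single i 1) (s i : R) * D (X i)).totalDegree
      ≤ (s - Finsupp.single i 1).degree + (e + 1) :=
        (totalDegree_mul _ _).trans (add_le_add (totalDegree_monomial_le _ _) (hD i))
    _ ≤ p.totalDegree + e := by lia

theorem mkDerivation_apply_eq_sum_mul_pderiv [Fintype σ] (f : σ → MvPolynomial σ R)
    (p : MvPolynomial σ R) : mkDerivation R f p = ∑ i, f i * pderiv i p := by
  classical
  have hsum (q : MvPolynomial σ R) : (∑ i, f i • pderiv i : Derivation R _ _) q =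
      ∑ i, f i * pderiv i q :=
    (congrFun (map_sum Derivation.coeFnAddMonoidHom (fun i ↦ f i • pderiv i) .univ) q).trans
      (Finset.sum_apply _ _ _)
  rw [← hsum]
  congr 1
  refine derivation_ext fun j ↦ ?_
  simp [hsum, pderiv_X, Pi.single_apply]

end Derivation

theorem exists_totalDegree_le_one_eval_eq_affineMap {ι R σ : Type*} [CommRing R] [Finite σ]
    (A : (σ → R) →ᵃ[R] (ι → R)) :
    ∃ f : ι → MvPolynomial σ R, (∀ i, (f i).totalDegree ≤ 1) ∧ ∀ v i, eval v (f i) = A v i := by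
  classical
  have := Fintype.ofFinite σ
  refine ⟨fun i ↦ (LinearMap.toMatrix' A.linear).toMvPolynomial i + C (A 0 i), fun i ↦ ?_,
    fun v i ↦ ?_⟩
  · exact (totalDegree_add _ _).trans (by simp [Matrix.toMvPolynomial_totalDegree_le])
  · rw [map_add, Matrix.toMvPolynomial_eval_eq_apply, LinearMap.toMatrix'_mulVec, eval_C,
      congrFun A.decomp v, Pi.add_apply, Pi.add_apply]

section MatrixEquation

variable {ι R σ : Type*} [Fintype ι] [CommRing R] [IsDomain R] [IsFormallyReal R]
  {D : Derivation R (MvPolynomial σ R) (MvPolynomial σ R)} {B : Matrix ι ι (MvPolynomial σ R)}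
  {c : R}

theorem totalDegree_le_of_map_derivation_eq {e : ℕ} (hD : ∀ i, (D (X i)).totalDegree ≤ e + 1)
    (hB : B.IsSymm) (hc : c ≠ 0) (hDB : B.map D = c • (B - B * B)) (α β : ι) :
    (B α β).totalDegree ≤ e := by
  have two_mul_le (γ : ι) : 2 * (B α γ).totalDegree ≤ (B α α).totalDegree + e := calc
    2 * (B α γ).totalDegree ≤ (∑ j, B α j * B α j).totalDegree :=
      two_mul_totalDegree_le_totalDegree_sum_mul_self (B α) (Finset.mem_univ γ)
    _ = (c • (B * B) α α).totalDegree := by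
      simp only [Matrix.mul_apply, hB.apply, totalDegree, support_smul_eq hc]
    _ = (c • B α α - D (B α α)).totalDegree := by
      have h : D (B α α) = c • (B α α - (B * B) α α) := congrFun₂ hDB α α
      rw [h, smul_sub, sub_sub_cancel]
    _ ≤ (B α α).totalDegree + e := (totalDegree_sub _ _).trans <| max_le
      ((totalDegree_smul_le _ _).trans (Nat.le_add_right _ _)) (totalDegree_derivation_le D hD _)
  have diagonal_le : (B α α).totalDegree ≤ e := by linarith [two_mul_le α]
  linarith [two_mul_le β]

theorem exists_isSymm_isIdempotentElem_eq_map_C (hD : ∀ i, (D (X i)).totalDegree ≤ 1)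
    (hB : B.IsSymm) (hc : c ≠ 0) (hDB : B.map D = c • (B - B * B)) :
    ∃ M : Matrix ι ι R, M.IsSymm ∧ IsIdempotentElem M ∧ B = M.map C := by
  obtain ⟨M, rfl⟩ : ∃ M : Matrix ι ι R, B = M.map C :=
    ⟨B.map (coeff 0), Matrix.ext fun α β ↦ totalDegree_eq_zero_iff_eq_C.mp <|
      Nat.le_zero.mp (totalDegree_le_of_map_derivation_eq hD hB hc hDB α β)⟩
  have hinj : Function.Injective fun N : Matrix ι ι R ↦ N.map (C : R →+* MvPolynomial σ R) :=
    Matrix.map_injective (C_injective σ R)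
  refine ⟨M, hinj hB, hinj ?_, rfl⟩
  have hzero : (M.map C).map D = 0 := by ext; simp
  rw [hzero, eq_comm, smul_eq_zero_iff_right hc, sub_eq_zero] at hDB
  simpa only [Matrix.map_mul] using hDB.symm

end MatrixEquation

theorem stmt_8_general {ι R σ : Type*} [Fintype ι] [Fintype σ] [CommRing R] [IsDomain R]
    [IsFormallyReal R] (A : (σ → R) →ᵃ[R] (σ → R)) {c : R} (hc : c ≠ 0)
    (B : Matrix ι ι (MvPolynomial σ R)) (hB : ∀ v, (B.map (eval v)).IsSymm)
    (hode : ∀ v α β, ∑ i, A v i * eval v (pderiv i (B α β)) =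
      c * (eval v (B α β) - ∑ γ, eval v (B α γ) * eval v (B γ β))) :
    ∃ M : Matrix ι ι R, M.IsSymm ∧ IsIdempotentElem M ∧ ∀ v, B.map (eval v) = M := by
  have := charZero_of_isFormallyReal R
  obtain ⟨f, hf, eval_f⟩ := exists_totalDegree_le_one_eval_eq_affineMap A
  have hBsymm : B.IsSymm := Matrix.ext fun α β ↦ MvPolynomial.funext fun v ↦ congrFun₂ (hB v) α β
  have hDB : B.map (mkDerivation R f) = c • (B - B * B) := by
    ext1 α β
    refine MvPolynomial.funext fun v ↦ ?_
    simpa [mkDerivation_apply_eq_sum_mul_pderiv, Matrix.mul_apply, eval_f, smul_eval]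
      using hode v α β
  obtain ⟨M, hM, hidem, rfl⟩ :=
    exists_isSymm_isIdempotentElem_eq_map_C (by simpa using hf) hBsymm hc hDB
  exact ⟨M, hM, hidem, fun v ↦ by ext; simp⟩

/-- Let `V = ℝⁿ` and `Z = ℝᵐ`, `Π_W` an orthogonal projection of `V` onto a
subspace `W`, `v₀ ∈ V`, and `B : V → End(Z)` a map whose value at each `v` is self-adjoint
(symmetric matrix in the standard orthonormal basis) and whose matrix entries
`B(v)_{αβ} = eval v (b α β)` are polynomial functions of `v`.  If
`∂_{Π_W(v−v₀)}B(v) = 2·B(v) − 2·B(v)²` for all `v`, then `B` is a constant map whose value is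
an orthogonal projection of `Z` onto some subspace (i.e. a symmetric idempotent matrix). -/
theorem stmt_8 (n m : ℕ)
    (Pw : (Fin n → ℝ) →ₗ[ℝ] (Fin n → ℝ)) (hPw : Pw ∘ₗ Pw = Pw)
    (hPwsym : ∀ u w : Fin n → ℝ, dotR (Pw u) w = dotR u (Pw w))
    (v₀ : Fin n → ℝ)
    (b : Fin m → Fin m → MvPolynomial (Fin n) ℝ)
    (hsym : ∀ (v : Fin n → ℝ) (α β : Fin m),
      MvPolynomial.eval v (b α β) = MvPolynomial.eval v (b β α))
    (hode : ∀ (v : Fin n → ℝ) (α β : Fin m),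
      (∑ i : Fin n, (Pw (v - v₀)) i * MvPolynomial.eval v (pderiv i (b α β)))
        = 2 * MvPolynomial.eval v (b α β)
          - 2 * ∑ γ : Fin m, MvPolynomial.eval v (b α γ) * MvPolynomial.eval v (b γ β)) :
    ∃ M : Matrix (Fin m) (Fin m) ℝ, M.transpose = M ∧ M * M = M ∧
      ∀ (v : Fin n → ℝ) (α β : Fin m), MvPolynomial.eval v (b α β) = M α β := by
  obtain ⟨M, hM, hidem, hval⟩ := stmt_8_general
    (Pw.toAffineMap - AffineMap.const ℝ _ (Pw v₀)) two_ne_zero (Matrix.of b)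
    (fun v ↦ Matrix.ext fun α β ↦ (hsym v α β).symm)
    (fun v α β ↦ by simpa [mul_sub] using hode v α β)
  exact ⟨M, hM, hidem, fun v α β ↦ congrFun₂ (hval v) α β⟩
end
end

section
/- Let V and Z be finite-dimensional real vector spaces, β : V × V → Z an alternating bilinear map, v₀ ∈ V, and c : V → Z a polynomial map. If the directional derivative of c at v in the direction v − v₀ satisfies ∂_{v−v₀}c(v) = β(v, v₀) for all v ∈ V, then c(v) = β(v, v₀) + c(v₀) for all v ∈ V. -/
noncomputable section

open MvPolynomial

/-!
Write `L = β(·, v₀)`. Along the line `t ↦ v₀ + t • (v - v₀)` the hypothesis says that `t` times the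
derivative of `c` is `L (v₀ + t • (v - v₀))`. At `t = 0` this reads `L v₀ = 0`, so the right side is
`t • L v` and cancelling `t ≠ 0` shows that the derivative is the constant `L v` off `t = 0`.
Continuity of `c` at `v₀` carries this across `t = 0`, so `c` is affine on the line.
-/

theorem hasFDerivAt_mvPolynomial_eval {𝕜 σ : Type*} [NontriviallyNormedField 𝕜] [Fintype σ]
    (p : MvPolynomial σ 𝕜) (x : σ → 𝕜) :
    HasFDerivAt (fun y : σ → 𝕜 => eval y p)
      (∑ i, eval x (pderiv i p) • (ContinuousLinearMap.proj i : (σ → 𝕜) →L[𝕜] 𝕜)) x := by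
  classical
  induction p using MvPolynomial.induction_on with
  | C a =>
    simp only [eval_C]
    exact (hasFDerivAt_const (𝕜 := 𝕜) a x).congr_fderiv (by ext; simp)
  | add p q hp hq =>
    simp only [map_add]
    exact (hp.fun_add hq).congr_fderiv (by ext; simp [add_mul, Finset.sum_add_distrib])
  | mul_X p j hp =>
    have product_rule := hp.fun_mul (hasFDerivAt_apply (𝕜 := 𝕜) j x)
    simp only [map_mul, eval_X]
    refine product_rule.congr_fderiv ?_
    ext y
    simp [pderiv_X, Pi.single_apply, add_mul, Finset.sum_add_distrib, Finset.mul_sum, apply_ite,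
      mul_assoc]

theorem hasLineDerivAt_mvPolynomial_eval {𝕜 σ : Type*} [NontriviallyNormedField 𝕜] [Fintype σ]
    (p : MvPolynomial σ 𝕜) (x u : σ → 𝕜) :
    HasLineDerivAt 𝕜 (fun y => eval y p) (∑ i, u i * eval x (pderiv i p)) x u := by
  simpa [mul_comm] using (hasFDerivAt_mvPolynomial_eval p x).hasLineDerivAt u

theorem hasDerivAt_along_line_of_hasLineDerivAt {𝕜 V Z : Type*} [NontriviallyNormedField 𝕜]
    [AddCommGroup V] [Module 𝕜 V] [NormedAddCommGroup Z] [NormedSpace 𝕜 Z]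
    {f : V → Z} {f' : Z} {x u : V} {t : 𝕜} (h : HasLineDerivAt 𝕜 f f' (x + t • u) u) :
    HasDerivAt (fun s : 𝕜 => f (x + s • u)) f' t := by
  have shifted : HasDerivAt (fun s : 𝕜 => f (x + t • u + (s - t) • u)) f' t :=
    HasDerivAt.comp_sub_const (f := fun s : 𝕜 => f (x + t • u + s • u)) t t
      (by rw [sub_self]; exact h)
  simpa [add_assoc, ← add_smul] using shifted

theorem eq_add_smul_of_hasDerivAt_of_ne {Z : Type*} [NormedAddCommGroup Z] [NormedSpace ℝ Z]
    {f : ℝ → Z} {a : ℝ} {m : Z} (hcont : ContinuousAt f a)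
    (hderiv : ∀ t ≠ a, HasDerivAt f m t) (t : ℝ) : f t = f a + (t - a) • m := by
  have hderiv_all : ∀ s, HasDerivAt f m s :=
    hasDerivAt_of_hasDerivAt_of_ne' (g := fun _ => m) hderiv hcont continuousAt_const
  have hderiv_diff : ∀ s, HasDerivAt (fun s => f s - (s - a) • m) 0 s := fun s => by
    simpa using (hderiv_all s).fun_sub (((hasDerivAt_id s).sub_const a).smul_const m)
  have hconst := is_const_of_deriv_eq_zero (fun s => (hderiv_diff s).differentiableAt)
    (fun s => (hderiv_diff s).deriv) t a
  simpa [sub_eq_iff_eq_add] using hconst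

theorem stmt_9_general {V Z : Type*} [AddCommGroup V] [Module ℝ V] [TopologicalSpace V]
    [ContinuousAdd V] [ContinuousSMul ℝ V] [NormedAddCommGroup Z] [NormedSpace ℝ Z]
    (L : V →ₗ[ℝ] Z) (v₀ : V) (c : V → Z) (hcont : ContinuousAt c v₀)
    (hderiv : ∀ v, HasLineDerivAt ℝ c (L v) v (v - v₀)) (v : V) :
    c v = L v + c v₀ := by
  have hLv₀ : L v₀ = 0 :=
    (hderiv v₀).unique (by simpa only [sub_self] using hasLineDerivAt_zero)
  have hcont_line : ContinuousAt (fun t : ℝ => c (v₀ + t • (v - v₀))) 0 :=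
    ContinuousAt.comp (by simpa using hcont) (by fun_prop)
  have hderiv_line : ∀ t : ℝ, t ≠ 0 →
      HasDerivAt (fun t : ℝ => c (v₀ + t • (v - v₀))) (L v) t := fun t ht => by
    refine hasDerivAt_along_line_of_hasLineDerivAt ((hasLineDerivAt_smul_iff ht).mp ?_)
    simpa [hLv₀] using hderiv (v₀ + t • (v - v₀))
  simpa [add_comm] using eq_add_smul_of_hasDerivAt_of_ne hcont_line hderiv_line 1

/-- Let `V = ℝⁿ` and `Z = ℝᵐ`, `bb : V × V → Z` an alternating bilinear map,
`v₀ ∈ V`, and `c : V → Z` a polynomial map with components `eval · (c α)`.  If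
`∂_{v−v₀}c(v) = bb(v, v₀)` for all `v`, then `c(v) = bb(v, v₀) + c(v₀)` for all `v`. -/
theorem stmt_9 (n m : ℕ)
    (bb : (Fin n → ℝ) →ₗ[ℝ] (Fin n → ℝ) →ₗ[ℝ] (Fin m → ℝ))
    (halt : ∀ v : Fin n → ℝ, bb v v = 0)
    (v₀ : Fin n → ℝ) (c : Fin m → MvPolynomial (Fin n) ℝ)
    (hode : ∀ (v : Fin n → ℝ) (α : Fin m),
      (∑ i : Fin n, (v - v₀) i * MvPolynomial.eval v (pderiv i (c α))) = bb v v₀ α) :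
    ∀ (v : Fin n → ℝ) (α : Fin m),
      MvPolynomial.eval v (c α) = bb v v₀ α + MvPolynomial.eval v₀ (c α) := by
  intro v α
  exact stmt_9_general (LinearMap.proj α ∘ₗ bb.flip v₀) v₀ _ (continuous_eval (c α)).continuousAt
    (fun w => by simpa [← hode] using hasLineDerivAt_mvPolynomial_eval (c α) w (w - v₀)) v
end
end

section
/- Let V be a nonzero finite-dimensional real inner product space, Q a self-adjoint endomorphism of V, and c₀ ∈ ℝ. If ‖v‖²·( (1/16)‖v‖⁴ + ⟨v, Qv⟩ + c₀ ) = ‖ (1/4)‖v‖²·v + 2·Qv ‖² for all v ∈ V, then Q² = (c₀/4)·Id_V; in particular c₀ ≥ 0. -/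
open RealInnerProductSpace

/-!
Expanding the square on the right-hand side, the terms of degree six and four in `v` cancel and
leave `‖Q v‖² = (c₀ / 4) ‖v‖²`. For self-adjoint `Q` this says that the self-adjoint operators `Q²`
and `(c₀ / 4) Id` have the same quadratic form, hence are equal.
-/

section

open scoped InnerProductSpace

variable {𝕜 E : Type*} [RCLike 𝕜]

section Seminormed

variable [SeminormedAddCommGroup E] [InnerProductSpace 𝕜 E]

lemma norm_ofReal_smul_add_ofReal_smul_sq (a b : ℝ) (v w : E) :
    ‖(a : 𝕜) • v + (b : 𝕜) • w‖ ^ 2 =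
      a ^ 2 * ‖v‖ ^ 2 + 2 * a * b * RCLike.re ⟪v, w⟫_𝕜 + b ^ 2 * ‖w‖ ^ 2 := by
  simp only [norm_add_sq (𝕜 := 𝕜), norm_smul, RCLike.norm_ofReal, mul_pow, sq_abs,
    inner_smul_left, inner_smul_right, RCLike.conj_ofReal, RCLike.re_ofReal_mul]
  ring

end Seminormed

variable [NormedAddCommGroup E] [InnerProductSpace 𝕜 E]

lemma comp_self_eq_smul_id_iff_norm_map_sq_eq {T : E →ₗ[𝕜] E} (hT : T.IsSymmetric) (a : ℝ) :
    T ∘ₗ T = (a : 𝕜) • LinearMap.id ↔ ∀ v, ‖T v‖ ^ 2 = a * ‖v‖ ^ 2 := by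
  have hsymm : (T ∘ₗ T - (a : 𝕜) • LinearMap.id).IsSymmetric :=
    (hT.pow 2).sub (LinearMap.IsSymmetric.id.smul (RCLike.conj_ofReal a))
  have hform (v : E) : ⟪(T ∘ₗ T - (a : 𝕜) • LinearMap.id : E →ₗ[𝕜] E) v, v⟫_𝕜 =
      ((‖T v‖ ^ 2 - a * ‖v‖ ^ 2 : ℝ) : 𝕜) := by
    simp [inner_sub_left, inner_smul_left, hT (T v) v, inner_self_eq_norm_sq_to_K]
  rw [← sub_eq_zero, ← hsymm.inner_map_self_eq_zero]
  simp only [hform, RCLike.ofReal_eq_zero, sub_eq_zero]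

lemma nonneg_of_norm_map_sq_eq [Nontrivial E] {f : E → E} {a : ℝ}
    (hf : ∀ v, ‖f v‖ ^ 2 = a * ‖v‖ ^ 2) : 0 ≤ a := by
  obtain ⟨v, hv⟩ := exists_ne (0 : E)
  have : 0 ≤ a * ‖v‖ ^ 2 := hf v ▸ sq_nonneg _
  exact nonneg_of_mul_nonneg_left this (by positivity)

theorem stmt_11_general [Nontrivial E] {Q : E →ₗ[𝕜] E} (hQ : Q.IsSymmetric) (c₀ : ℝ)
    (h : ∀ v : E,
      ‖v‖ ^ 2 * ((1 / 16) * ‖v‖ ^ 4 + RCLike.re ⟪v, Q v⟫_𝕜 + c₀)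
        = ‖(((1 / 4) * ‖v‖ ^ 2 : ℝ) : 𝕜) • v + ((2 : ℝ) : 𝕜) • Q v‖ ^ 2) :
    Q ∘ₗ Q = ((c₀ / 4 : ℝ) : 𝕜) • LinearMap.id ∧ 0 ≤ c₀ := by
  have hnorm (v : E) : ‖Q v‖ ^ 2 = c₀ / 4 * ‖v‖ ^ 2 := by
    have hv := h v
    rw [norm_ofReal_smul_add_ofReal_smul_sq] at hv
    linarith
  have hc : 0 ≤ c₀ / 4 := nonneg_of_norm_map_sq_eq hnorm
  exact ⟨(comp_self_eq_smul_id_iff_norm_map_sq_eq hQ _).mpr hnorm, by linarith⟩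

end

/-- Let `V` be a nonzero finite-dimensional real inner product space, `Q` a
self-adjoint endomorphism of `V` and `c₀ ∈ ℝ`.  If
`‖v‖²·((1/16)‖v‖⁴ + ⟨v, Qv⟩ + c₀) = ‖(1/4)‖v‖²·v + 2·Qv‖²` for all `v ∈ V`, then
`Q² = (c₀/4)·Id_V`; in particular `c₀ ≥ 0`. -/
theorem stmt_11 (V : Type*) [NormedAddCommGroup V] [InnerProductSpace ℝ V]
    [FiniteDimensional ℝ V] [Nontrivial V]
    (Q : V →ₗ[ℝ] V) (hQ : ∀ u w : V, ⟪Q u, w⟫ = ⟪u, Q w⟫) (c₀ : ℝ)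
    (h : ∀ v : V,
      ‖v‖ ^ 2 * ((1 / 16) * ‖v‖ ^ 4 + ⟪v, Q v⟫ + c₀)
        = ‖((1 / 4) * ‖v‖ ^ 2) • v + (2 : ℝ) • Q v‖ ^ 2) :
    Q ∘ₗ Q = (c₀ / 4) • LinearMap.id ∧ 0 ≤ c₀ := by
  exact stmt_11_general (𝕜 := ℝ) hQ c₀ h
end

section
/- Let V = V₊ ⊕ V₋ be an orthogonal decomposition of V with orthogonal projections Π₊, Π₋, let λ ≥ 0, v₀ ∈ V, z₀ ∈ Z. Then the polynomial function G₀(v,z) = (1/16)‖v − v₀‖⁴ + ‖z − z₀ + ½[v, v₀]‖² + λ·⟨v − v₀, (Π₊ − Π₋)(v − v₀)⟩ + 4λ² is non-negative at every point (v,z) ∈ V × Z. -/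
noncomputable section

/-! Write `w = v - v₀`, and let `p = ⟨w, P₊ w⟩` and `q = ⟨w, P₋ w⟩`, so that `⟨w, w⟩ = p + q`. Up to
the squared norm of its `Z`-component, `G₀` is then the polynomial
`(p + q)² / 16 + λ (p - q) + 4 λ² = p q / 4 + ((p - q) / 4 + 2 λ)²`, and `p, q ≥ 0`. -/

lemma isNonneg_dotProductBilin {ι R : Type*} [Fintype ι] [CommRing R] [LinearOrder R]
    [IsOrderedRing R] :
    (dotProductBilin R R : (ι → R) →ₗ[R] (ι → R) →ₗ[R] R).IsNonneg :=
  ⟨fun v ↦ Finset.sum_nonneg fun i _ ↦ mul_self_nonneg (v i)⟩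

lemma apply_nonneg_of_isSelfAdjoint_of_isIdempotentElem {R M : Type*} [CommSemiring R] [LE R]
    [AddCommMonoid M] [Module R M] {B : M →ₗ[R] M →ₗ[R] R} {P : Module.End R M}
    (hB : B.IsNonneg) (hPsymm : B.IsSelfAdjoint P) (hP : IsIdempotentElem P) (v : M) :
    0 ≤ B v (P v) := by
  have hPv : P (P v) = P v := LinearMap.congr_fun hP v
  calc 0 ≤ B (P v) (P v) := hB.nonneg (P v)
    _ = B v (P (P v)) := hPsymm v (P v)
    _ = B v (P v) := by rw [hPv]

lemma apply_self_eq_add_of_add_eq_one {R M : Type*} [CommSemiring R] [AddCommMonoid M]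
    [Module R M] (B : M →ₗ[R] M →ₗ[R] R) {P Q : Module.End R M} (hPQ : P + Q = 1) (v : M) :
    B v v = B v (P v) + B v (Q v) := by
  have hv : P v + Q v = v := LinearMap.congr_fun hPQ v
  rw [← map_add, hv]

section LinearOrderedField

variable {K : Type*} [Field K] [LinearOrder K] [IsStrictOrderedRing K]

lemma add_sq_add_mul_sub_add_sq_nonneg {p q : K} (hp : 0 ≤ p) (hq : 0 ≤ q) (l : K) :
    0 ≤ 1 / 16 * (p + q) ^ 2 + l * (p - q) + 4 * l ^ 2 :=
  calc 0 ≤ 1 / 4 * (p * q) + (1 / 4 * (p - q) + 2 * l) ^ 2 := by positivity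
    _ = 1 / 16 * (p + q) ^ 2 + l * (p - q) + 4 * l ^ 2 := by ring

theorem stmt_15_general {V Z : Type*} [AddCommGroup V] [Module K V] [AddCommGroup Z] [Module K Z]
    (B : V →ₗ[K] V →ₗ[K] K) {C : Z →ₗ[K] Z →ₗ[K] K} (hC : C.IsNonneg)
    (br : V → V → Z) {P Q : Module.End K V} (hPQ : P + Q = 1)
    (hP : ∀ v, 0 ≤ B v (P v)) (hQ : ∀ v, 0 ≤ B v (Q v)) (l : K) (v₀ v : V) (z₀ z : Z) :
    0 ≤ 1 / 16 * B (v - v₀) (v - v₀) ^ 2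
      + C (z - z₀ + (1 / 2 : K) • br v v₀) (z - z₀ + (1 / 2 : K) • br v v₀)
      + l * B (v - v₀) (P (v - v₀) - Q (v - v₀))
      + 4 * l ^ 2 := by
  have hZ := hC.nonneg (z - z₀ + (1 / 2 : K) • br v v₀)
  have hV := add_sq_add_mul_sub_add_sq_nonneg (hP (v - v₀)) (hQ (v - v₀)) l
  rw [← apply_self_eq_add_of_add_eq_one B hPQ, ← map_sub] at hV
  linarith

end LinearOrderedField

/-- Let `V = ℝⁿ`, `Z = ℝᵐ`, `J` of Heisenberg type with induced bracket `br`,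
`V = V₊ ⊕ V₋` an orthogonal decomposition (projections `P₊, P₋`), `λ ≥ 0`, `v₀ ∈ V`, `z₀ ∈ Z`.
Then the polynomial function
`G₀(v,z) = (1/16)‖v − v₀‖⁴ + ‖z − z₀ + ½[v, v₀]‖² + λ⟨v − v₀, (P₊ − P₋)(v − v₀)⟩ + 4λ²`
is non-negative at every point `(v, z)`. -/
theorem stmt_15 (n m : ℕ)
    (J : (Fin m → ℝ) →ₗ[ℝ] (Fin n → ℝ) →ₗ[ℝ] (Fin n → ℝ))
    (hJ : ∀ (z : Fin m → ℝ) (v : Fin n → ℝ), dotR (J z v) (J z v) = dotR z z * dotR v v)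
    (br : (Fin n → ℝ) →ₗ[ℝ] (Fin n → ℝ) →ₗ[ℝ] (Fin m → ℝ))
    (hbr : ∀ (v₁ v₂ : Fin n → ℝ) (z : Fin m → ℝ), dotR (br v₁ v₂) z = dotR (J z v₁) v₂)
    (Pp Pm : (Fin n → ℝ) →ₗ[ℝ] (Fin n → ℝ))
    (hsum : Pp + Pm = LinearMap.id)
    (hPp : Pp ∘ₗ Pp = Pp) (hPm : Pm ∘ₗ Pm = Pm)
    (hPpsym : ∀ u w : Fin n → ℝ, dotR (Pp u) w = dotR u (Pp w))
    (hPmsym : ∀ u w : Fin n → ℝ, dotR (Pm u) w = dotR u (Pm w))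
    (lam : ℝ) (hlam : 0 ≤ lam)
    (v₀ : Fin n → ℝ) (z₀ : Fin m → ℝ) :
    ∀ (v : Fin n → ℝ) (z : Fin m → ℝ),
      0 ≤ (1 / 16) * (dotR (v - v₀) (v - v₀)) ^ 2
        + dotR (z - z₀ + (1 / 2 : ℝ) • br v v₀) (z - z₀ + (1 / 2 : ℝ) • br v v₀)
        + lam * dotR (v - v₀) (Pp (v - v₀) - Pm (v - v₀))
        + 4 * lam ^ 2 := fun v z ↦
  stmt_15_general (dotProductBilin ℝ ℝ) isNonneg_dotProductBilin (br · ·) hsum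
    (apply_nonneg_of_isSelfAdjoint_of_isIdempotentElem isNonneg_dotProductBilin hPpsym hPp)
    (apply_nonneg_of_isSelfAdjoint_of_isIdempotentElem isNonneg_dotProductBilin hPmsym hPm)
    lam v₀ v z₀ z
end
end

section
/- Let V and Z be finite-dimensional real inner product spaces, J : Z → End(V) a linear map satisfying ‖J_z v‖ = ‖z‖·‖v‖ for all z ∈ Z, v ∈ V, and let V = V₁ ⊕ V₂ be an orthogonal decomposition with orthogonal projections Π₁, Π₂. Then the identity ‖Π₁ J_z(Π₂ v + v)‖² + ‖Π₂ J_z Π₂ v‖² = 4·‖Π₂ v‖²·‖z‖² holds for all v ∈ V and z ∈ Z if and only if J_z(V₁) ⊆ V₂ and J_z(V₂) ⊆ V₁ for every z ∈ Z. -/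
open RealInnerProductSpace

/-!
The claim holds for each `z` separately: let `A = J z`, `c = ‖z‖`, `P = P₁` and `1 - P = P₂`. Write
`v = v₁ + v₂` with `v₁ = P v` and `v₂ = (1 - P) v`. As `‖A v₂‖ = c ‖v₂‖`, Pythagoras turns the norm
identity at `v` into `‖P A v₁ + 2 P A v₂‖² = ‖2 P A v₂‖² + 3 ‖(1 - P) A v₂‖²`, which holds when
`P A v₁ = 0` and `(1 - P) A v₂ = 0`. Conversely, `v₂ = 0` forces the first of these equations and
`v₁ = 0` the second.
-/

section SymmetricProjection

variable {𝕜 E : Type*} [RCLike 𝕜]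

theorem norm_sq_eq_add_of_isSymmetricProjection [SeminormedAddCommGroup E] [InnerProductSpace 𝕜 E]
    {P : E →ₗ[𝕜] E} (hP : P.IsSymmetricProjection) (x : E) :
    ‖x‖ ^ 2 = ‖P x‖ ^ 2 + ‖(1 - P) x‖ ^ 2 := by
  have horth : inner 𝕜 (P x) ((1 - P) x) = 0 := by
    rw [hP.isSymmetric, ← Module.End.mul_apply, hP.isIdempotentElem.mul_one_sub_self,
      LinearMap.zero_apply, inner_zero_right]
  have hdecomp : P x + (1 - P) x = x := by
    rw [← LinearMap.add_apply, add_sub_cancel, Module.End.one_apply]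
  simpa only [hdecomp, ← sq] using norm_add_sq_eq_norm_sq_add_norm_sq_of_inner_eq_zero _ _ horth

theorem norm_sq_add_norm_sq_eq_iff_of_norm_map_eq
    [SeminormedAddCommGroup E] [InnerProductSpace 𝕜 E]
    {P : E →ₗ[𝕜] E} (hP : P.IsSymmetricProjection) (A : E →ₗ[𝕜] E) {c : ℝ} {v : E}
    (hA : ‖A ((1 - P) v)‖ = c * ‖(1 - P) v‖) :
    ‖P (A ((1 - P) v + v))‖ ^ 2 + ‖(1 - P) (A ((1 - P) v))‖ ^ 2 = 4 * ‖(1 - P) v‖ ^ 2 * c ^ 2 ↔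
      ‖P (A (P v)) + (2 : 𝕜) • P (A ((1 - P) v))‖ ^ 2 =
        ‖(2 : 𝕜) • P (A ((1 - P) v))‖ ^ 2 + 3 * ‖(1 - P) (A ((1 - P) v))‖ ^ 2 := by
  have hsplit : (1 - P) v + v = P v + (2 : 𝕜) • (1 - P) v := by
    simp only [LinearMap.sub_apply, Module.End.one_apply]
    module
  have hpyth : c ^ 2 * ‖(1 - P) v‖ ^ 2 =
      ‖P (A ((1 - P) v))‖ ^ 2 + ‖(1 - P) (A ((1 - P) v))‖ ^ 2 := by
    rw [← norm_sq_eq_add_of_isSymmetricProjection hP, hA, mul_pow]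
  have hdouble : ‖(2 : 𝕜) • P (A ((1 - P) v))‖ ^ 2 = 4 * ‖P (A ((1 - P) v))‖ ^ 2 := by
    rw [norm_smul, RCLike.norm_two, mul_pow]
    norm_num
  rw [hsplit, map_add, map_add, map_smul, map_smul, hdouble]
  constructor <;> intro h <;> linarith

theorem stmt_18_general [NormedAddCommGroup E] [InnerProductSpace 𝕜 E]
    {P : E →ₗ[𝕜] E} (hP : P.IsSymmetricProjection) (A : E →ₗ[𝕜] E) {c : ℝ}
    (hA : ∀ v ∈ P.ker, ‖A v‖ = c * ‖v‖) :
    (∀ v : E, ‖P (A ((1 - P) v + v))‖ ^ 2 + ‖(1 - P) (A ((1 - P) v))‖ ^ 2 =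
        4 * ‖(1 - P) v‖ ^ 2 * c ^ 2) ↔
      ∀ v : E, A (P v) ∈ (1 - P).range ∧ A ((1 - P) v) ∈ P.range := by
  have hPP (v : E) : P (P v) = P v := LinearMap.congr_fun hP.isIdempotentElem v
  have hPQ (v : E) : P ((1 - P) v) = 0 :=
    LinearMap.congr_fun hP.isIdempotentElem.mul_one_sub_self v
  have hQP (v : E) : (1 - P) (P v) = 0 :=
    LinearMap.congr_fun hP.isIdempotentElem.one_sub_mul_self v
  have hQQ (v : E) : (1 - P) ((1 - P) v) = (1 - P) v :=
    LinearMap.congr_fun hP.isIdempotentElem.one_sub v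
  simp only [norm_sq_add_norm_sq_eq_iff_of_norm_map_eq hP A (hA _ (hPQ _)),
    ← LinearMap.IsIdempotentElem.ker_eq_range_one_sub hP.isIdempotentElem,
    LinearMap.IsIdempotentElem.range_eq_ker_one_sub hP.isIdempotentElem, LinearMap.mem_ker]
  refine ⟨fun h v => ⟨?_, ?_⟩, fun h v => ?_⟩
  · simpa [-LinearMap.sub_apply, hPP, hQP] using h (P v)
  · simpa [-LinearMap.sub_apply, hPQ, hQQ] using h ((1 - P) v)
  · obtain ⟨h₁, h₂⟩ := h v
    rw [h₁, h₂, zero_add, norm_zero, zero_pow two_ne_zero, mul_zero, add_zero]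

end SymmetricProjection

/-- Let `V`, `Z` be finite-dimensional real inner product spaces,
`J : Z → End(V)` linear with `‖J_z v‖ = ‖z‖·‖v‖`, and `V = V₁ ⊕ V₂` an orthogonal
decomposition with orthogonal projections `P₁, P₂`.  Then
`‖P₁ J_z(P₂v + v)‖² + ‖P₂ J_z P₂v‖² = 4‖P₂v‖²‖z‖²` holds for all `v, z` iff
`J_z(V₁) ⊆ V₂` and `J_z(V₂) ⊆ V₁` for every `z`. -/
theorem stmt_18 (V Z : Type*)
    [NormedAddCommGroup V] [InnerProductSpace ℝ V] [FiniteDimensional ℝ V]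
    [NormedAddCommGroup Z] [InnerProductSpace ℝ Z] [FiniteDimensional ℝ Z]
    (J : Z →ₗ[ℝ] V →ₗ[ℝ] V)
    (hJ : ∀ (z : Z) (v : V), ‖J z v‖ = ‖z‖ * ‖v‖)
    (P₁ P₂ : V →ₗ[ℝ] V)
    (hsum : P₁ + P₂ = LinearMap.id)
    (hP₁ : P₁ ∘ₗ P₁ = P₁) (hP₂ : P₂ ∘ₗ P₂ = P₂)
    (hP₁sym : ∀ u w : V, ⟪P₁ u, w⟫ = ⟪u, P₁ w⟫)
    (hP₂sym : ∀ u w : V, ⟪P₂ u, w⟫ = ⟪u, P₂ w⟫) :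
    (∀ (v : V) (z : Z),
        ‖P₁ (J z (P₂ v + v))‖ ^ 2 + ‖P₂ (J z (P₂ v))‖ ^ 2 = 4 * ‖P₂ v‖ ^ 2 * ‖z‖ ^ 2) ↔
    (∀ (z : Z) (v : V),
        J z (P₁ v) ∈ LinearMap.range P₂ ∧ J z (P₂ v) ∈ LinearMap.range P₁) := by
  obtain rfl : P₂ = 1 - P₁ := eq_sub_of_add_eq' hsum
  exact forall_comm.trans <| forall_congr' fun z =>
    stmt_18_general ⟨hP₁, hP₁sym⟩ _ fun v _ => hJ z v
end

section
/- Let G, H ∈ ℝ[x₁,…,x_N, y₁,…,y_M, t] be polynomials whose degrees in the variables y₁,…,y_M are at most 2, and let G₂ and H₂ denote their homogeneous parts of degree 2 in the variables y₁,…,y_M. Assume that G₂ and H₂ do not involve the variable t and that G₂ ≠ 0. If G/t² and H/t³ are algebraically dependent elements of the fraction field K, then H₂ = 0. -/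
noncomputable section

/-- The weight assigning `1` to each of the variables `y₁,…,y_M` and `0` to the variables
`x₁,…,x_N` and `t`, so that the associated weighted degree is the degree in the `y`-variables. -/
def yWeight (N M : ℕ) : (Fin N ⊕ Fin M ⊕ Unit) → ℕ :=
  Sum.elim (fun _ => 0) (Sum.elim (fun _ => 1) (fun _ => 0))

/-!
Give `x_i` the weight `w i` and substitute `x_i ↦ x_i Z ^ (w i)` in a relation
`R (G / t ^ a, H / t ^ b) = 0`. If `w t = 0`, the highest coefficient in `Z` shows that the leading
form of `R` vanishes at `(G_k / t ^ a, H_k / t ^ b)`, where `G_k`, `H_k` are the components of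
weight `k`. A nonzero binary form that vanishes at `(u, v)` with `v ≠ 0` makes `u / v` algebraic
over the coefficients, so if `H_k ≠ 0` then `G_k t ^ b / (t ^ a H_k)` is algebraic. But a quotient
of polynomials of different degrees in `t` is transcendental, as seen by giving weight `1` to `t`
and weight `0` to the other variables.
-/

open MvPolynomial
open scoped Polynomial

section LeadingForm

variable {ι K S : Type*} [CommSemiring K] [CommSemiring S] [Algebra K S] {p : ι → S[X]} {k : ℕ}

lemma natDegree_aeval_monomial_le (hp : ∀ i, (p i).natDegree ≤ k) (m : ι →₀ ℕ) (c : K) :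
    (aeval p (monomial m c)).natDegree ≤ m.degree * k := by
  rw [aeval_monomial, Polynomial.algebraMap_apply, Finsupp.degree_apply, Finset.sum_mul]
  exact (Polynomial.natDegree_C_mul_le _ _).trans <| (Polynomial.natDegree_prod_le _ _).trans <|
    Finset.sum_le_sum fun i _ => Polynomial.natDegree_pow_le_of_le _ (hp i)

lemma coeff_aeval_monomial_of_natDegree_le (hp : ∀ i, (p i).natDegree ≤ k) (m : ι →₀ ℕ) (c : K) :
    (aeval p (monomial m c)).coeff (m.degree * k) =
      aeval (fun i => (p i).coeff k) (monomial m c) := by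
  have hprod {T : Type _} [CommSemiring T] (g : ι → T) :
      (m.toMultiset.map g).prod = m.prod fun i e => g i ^ e := by
    rw [Finsupp.toMultiset_map, Finsupp.prod_toMultiset,
      Finsupp.prod_mapDomain_index pow_zero pow_add]
  have hcoeff := Polynomial.coeff_multiset_prod_of_natDegree_le (m.toMultiset.map p) k
    (by simp [hp])
  rw [Multiset.card_map, Multiset.map_map, hprod, hprod, Finsupp.card_toMultiset] at hcoeff
  rw [aeval_monomial, aeval_monomial, Polynomial.algebraMap_apply, Polynomial.coeff_C_mul]
  exact congrArg _ hcoeff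

lemma coeff_aeval_of_totalDegree_le {d : ℕ} (hk : k ≠ 0)
    (hp : ∀ i, (p i).natDegree ≤ k) {R : MvPolynomial ι K} (hR : R.totalDegree ≤ d) :
    (aeval p R).coeff (d * k) = aeval (fun i => (p i).coeff k) (homogeneousComponent d R) := by
  classical
  conv_lhs => rw [R.as_sum]
  simp only [homogeneousComponent_apply, map_sum, Polynomial.finsetSum_coeff, Finset.sum_filter]
  refine Finset.sum_congr rfl fun m hm => ?_
  have hmd : m.degree ≤ d := (le_totalDegree hm).trans hR
  split_ifs with h
  · rw [← h, coeff_aeval_monomial_of_natDegree_le hp]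
  · refine Polynomial.coeff_eq_zero_of_natDegree_lt <|
      (natDegree_aeval_monomial_le hp m _).trans_lt ?_
    exact Nat.mul_lt_mul_of_pos_right (lt_of_le_of_ne hmd h) (Nat.pos_of_ne_zero hk)

end LeadingForm

lemma weightedHomogeneousComponent_weightedTotalDegree_ne_zero {σ K M : Type*} [CommSemiring K]
    [AddCommMonoid M] [LinearOrder M] [OrderBot M] (w : σ → M) {p : MvPolynomial σ K}
    (hp : p ≠ 0) : weightedHomogeneousComponent w (weightedTotalDegree w p) p ≠ 0 := by
  obtain ⟨m, hm, hmax⟩ := Finset.exists_mem_eq_sup p.support (support_nonempty.2 hp)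
    (Finsupp.weight w)
  have hweight : Finsupp.weight w m = weightedTotalDegree w p := hmax.symm
  refine ne_zero_iff.2 ⟨m, ?_⟩
  rw [coeff_weightedHomogeneousComponent, if_pos hweight]
  exact mem_support_iff.1 hm

lemma homogeneousComponent_totalDegree_ne_zero {σ K : Type*} [CommSemiring K]
    {p : MvPolynomial σ K} (hp : p ≠ 0) : homogeneousComponent p.totalDegree p ≠ 0 := by
  rw [← weightedTotalDegree_one]
  exact weightedHomogeneousComponent_weightedTotalDegree_ne_zero 1 hp

lemma aeval_const_mul_of_isHomogeneous {ι K S : Type*} [CommSemiring K] [CommSemiring S]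
    [Algebra K S] {R : MvPolynomial ι K} {d : ℕ} (hR : R.IsHomogeneous d) (c : S) (g : ι → S) :
    aeval (fun i => c * g i) R = c ^ d * aeval g R := by
  simp only [aeval_def, eval₂_eq, Finset.mul_sum]
  refine Finset.sum_congr rfl fun m hm => ?_
  have hmd : m.degree = d := by
    rw [Finsupp.degree_eq_weight_one]; exact hR (mem_support_iff.1 hm)
  simp only [mul_pow, Finset.prod_mul_distrib]
  rw [Finset.prod_pow_eq_pow_sum, ← Finsupp.degree_apply, hmd]
  ring

lemma isAlgebraic_div_of_aeval_eq_zero {K F : Type*} [CommRing K] [Field F] [Algebra K F]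
    {R : MvPolynomial (Fin 2) K} {d : ℕ} (hR : R.IsHomogeneous d) (hR0 : R ≠ 0)
    {u : Fin 2 → F} (hu1 : u 1 ≠ 0) (hu : aeval u R = 0) : IsAlgebraic K (u 0 / u 1) := by
  have hhom := Polynomial.homogenize_eq_of_isHomogeneous hR rfl
  refine ⟨aeval ![Polynomial.X, 1] R, fun h => hR0 ?_, ?_⟩
  · rw [← hhom, h, Polynomial.homogenize_zero]
  have hpoint : (fun i => Polynomial.aeval (u 0 / u 1) ((![Polynomial.X, 1] : Fin 2 → K[X]) i)) =
      fun i => (u 1)⁻¹ * u i := by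
    ext i
    fin_cases i <;> simp [hu1, div_eq_inv_mul]
  rw [comp_aeval_apply, hpoint, aeval_const_mul_of_isHomogeneous hR, hu, mul_zero]

section WeightScaling

variable {σ K : Type*} [CommSemiring K] (B : Type*) [CommSemiring B] [Algebra K B]
  [Algebra (MvPolynomial σ K) B] (w : σ → ℕ)

/-- The substitution `x_i ↦ x_i Z ^ (w i)`, which turns the grading by the weight `w` into the
grading by powers of `Z`. Coefficients are taken in a `MvPolynomial σ K`-algebra `B`, so that they
can be divided when `B` is the fraction field. -/
def weightScaling : MvPolynomial σ K →ₐ[K] B[X] :=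
  aeval fun i => Polynomial.C (algebraMap (MvPolynomial σ K) B (X i)) * Polynomial.X ^ w i

variable [IsScalarTower K (MvPolynomial σ K) B]

lemma weightScaling_monomial (m : σ →₀ ℕ) (a : K) :
    weightScaling B w (monomial m a) =
      Polynomial.C (algebraMap _ B (monomial m a)) * Polynomial.X ^ Finsupp.weight w m := by
  rw [weightScaling, aeval_monomial, monomial_eq, Finsupp.weight_apply]
  simp only [Finsupp.prod, Finsupp.sum, mul_pow, Finset.prod_mul_distrib, ← pow_mul,
    Finset.prod_pow_eq_pow_sum, map_mul, map_prod, map_pow, smul_eq_mul, mul_comm (w _), mul_assoc,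
    ← algebraMap_eq, ← IsScalarTower.algebraMap_apply, Polynomial.algebraMap_apply]

lemma coeff_weightScaling (p : MvPolynomial σ K) (n : ℕ) :
    (weightScaling B w p).coeff n = algebraMap _ B (weightedHomogeneousComponent w n p) := by
  classical
  rw [weightedHomogeneousComponent_apply, map_sum, Finset.sum_filter]
  conv_lhs => rw [p.as_sum]
  simp only [map_sum, Polynomial.finsetSum_coeff, weightScaling_monomial,
    Polynomial.coeff_C_mul_X_pow, eq_comm]

variable {w} in
lemma weightScaling_of_isWeightedHomogeneous {p : MvPolynomial σ K} {n : ℕ}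
    (hp : IsWeightedHomogeneous w p n) :
    weightScaling B w p = Polynomial.C (algebraMap _ B p) * Polynomial.X ^ n := by
  classical
  ext l
  rw [coeff_weightScaling, weightedHomogeneousComponent_of_mem hp, Polynomial.coeff_C_mul_X_pow]
  split_ifs <;> simp

variable {w} in
lemma natDegree_weightScaling_le {p : MvPolynomial σ K} {n : ℕ}
    (hp : weightedTotalDegree w p ≤ n) : (weightScaling B w p).natDegree ≤ n :=
  Polynomial.natDegree_le_iff_coeff_eq_zero.2 fun l hl => by
    rw [coeff_weightScaling, weightedHomogeneousComponent_eq_zero _ _ (hp.trans_lt hl), map_zero]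

variable [FaithfulSMul (MvPolynomial σ K) B]

lemma natDegree_weightScaling (p : MvPolynomial σ K) :
    (weightScaling B w p).natDegree = weightedTotalDegree w p := by
  rcases eq_or_ne p 0 with rfl | hp
  · simp [weightedTotalDegree_zero]
  refine (natDegree_weightScaling_le B le_rfl).antisymm (Polynomial.le_natDegree_of_ne_zero ?_)
  rw [coeff_weightScaling, Ne, FaithfulSMul.algebraMap_eq_zero_iff]
  exact weightedHomogeneousComponent_weightedTotalDegree_ne_zero w hp

lemma weightScaling_injective : Function.Injective (weightScaling (K := K) B w) := by
  have heval : ((Polynomial.aeval (1 : B)).restrictScalars K).comp (weightScaling B w) =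
      IsScalarTower.toAlgHom K (MvPolynomial σ K) B := by
    ext i
    simp [weightScaling]
  refine Function.Injective.of_comp (f := Polynomial.aeval (1 : B)) ?_
  convert FaithfulSMul.algebraMap_injective (MvPolynomial σ K) B using 1
  exact congrArg DFunLike.coe heval

end WeightScaling

lemma algebraMap_injective_of_isFractionRing (σ K F : Type*) [CommRing K] [CommRing F]
    [Algebra K F] [Algebra (MvPolynomial σ K) F] [IsScalarTower K (MvPolynomial σ K) F]
    [IsFractionRing (MvPolynomial σ K) F] : Function.Injective (algebraMap K F) := by
  rw [IsScalarTower.algebraMap_eq K (MvPolynomial σ K) F]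
  exact (IsFractionRing.injective (MvPolynomial σ K) F).comp (C_injective σ K)

section Fractions

variable {σ : Type*} (K F : Type*) [CommRing K] [Field F] [Algebra K F]
  [Algebra (MvPolynomial σ K) F] [IsScalarTower K (MvPolynomial σ K) F]
  [IsFractionRing (MvPolynomial σ K) F] (w : σ → ℕ)

/-- The extension of the substitution `x_i ↦ x_i Z ^ (w i)` to the fraction field `F` of
`MvPolynomial σ K`. The degree in `Z` of the image of a fraction is the weighted degree of its
numerator minus that of its denominator. -/
def weightScalingFrac : F →ₐ[K] RatFunc F :=
  IsFractionRing.liftAlgHom (A := MvPolynomial σ K)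
    (g := (IsScalarTower.toAlgHom K F[X] (RatFunc F)).comp (weightScaling F w))
    ((RatFunc.algebraMap_injective F).comp (weightScaling_injective F w))

variable {K}

lemma weightScalingFrac_algebraMap (p : MvPolynomial σ K) :
    weightScalingFrac K F w (algebraMap _ F p) =
      algebraMap F[X] (RatFunc F) (weightScaling F w p) :=
  IsFractionRing.lift_algebraMap (g := ((IsScalarTower.toAlgHom K F[X] (RatFunc F)).comp
    (weightScaling F w)).toRingHom)
    ((RatFunc.algebraMap_injective F).comp (weightScaling_injective F w)) p

lemma intDegree_weightScalingFrac_algebraMap (p : MvPolynomial σ K) :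
    (weightScalingFrac K F w (algebraMap _ F p)).intDegree = weightedTotalDegree w p := by
  rw [weightScalingFrac_algebraMap, RatFunc.intDegree_polynomial, natDegree_weightScaling]

variable {w} in
lemma transcendental_div_of_weightedTotalDegree_ne {p q : MvPolynomial σ K} (hp : p ≠ 0)
    (hq : q ≠ 0) (hpq : weightedTotalDegree w p ≠ weightedTotalDegree w q) :
    Transcendental K (algebraMap _ F p / algebraMap _ F q) := by
  intro halg
  obtain ⟨c, hc⟩ : ∃ c, weightScalingFrac K F w (algebraMap _ F p / algebraMap _ F q) =
      RatFunc.C c :=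
    of_not_not fun h => RatFunc.transcendental_of_ne_C _ h <|
      (halg.algHom _).extendScalars (algebraMap_injective_of_isFractionRing σ K F)
  have hp' : weightScalingFrac K F w (algebraMap _ F p) ≠ 0 := by simpa using hp
  have hq' : weightScalingFrac K F w (algebraMap _ F q) ≠ 0 := by simpa using hq
  have hdeg := congrArg RatFunc.intDegree hc
  rw [map_div₀, div_eq_mul_inv, RatFunc.intDegree_mul hp' (inv_ne_zero hq'), RatFunc.intDegree_inv,
    intDegree_weightScalingFrac_algebraMap, intDegree_weightScalingFrac_algebraMap,
    RatFunc.intDegree_C] at hdeg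
  omega

variable {w} in
lemma aeval_homogeneousComponent_div_eq_zero {ι : Type*} {f s : ι → MvPolynomial σ K} {k d : ℕ}
    (hk : k ≠ 0) (hf : ∀ i, weightedTotalDegree w (f i) ≤ k)
    (hs : ∀ i, IsWeightedHomogeneous w (s i) 0) {R : MvPolynomial ι K} (hRd : R.totalDegree ≤ d)
    (hR : aeval (fun i => algebraMap _ F (f i) / algebraMap _ F (s i)) R = 0) :
    aeval (fun i => algebraMap _ F (weightedHomogeneousComponent w k (f i)) / algebraMap _ F (s i))
      (homogeneousComponent d R) = 0 := by
  set p : ι → F[X] := fun i =>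
    Polynomial.C (algebraMap _ F (s i))⁻¹ * weightScaling F w (f i) with hp
  have hfrac (i : ι) : weightScalingFrac K F w (algebraMap _ F (f i) / algebraMap _ F (s i)) =
      algebraMap F[X] (RatFunc F) (p i) := by
    rw [map_div₀, weightScalingFrac_algebraMap, weightScalingFrac_algebraMap,
      weightScaling_of_isWeightedHomogeneous F (hs i)]
    simp [hp, div_eq_inv_mul]
  have hp0 : aeval p R = 0 := by
    apply RatFunc.algebraMap_injective F
    have himage := congrArg (weightScalingFrac K F w) hR
    rw [comp_aeval_apply, map_zero] at himage
    simp only [hfrac] at himage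
    rwa [map_zero, ← aeval_algebraMap_apply]
  have hdeg (i : ι) : (p i).natDegree ≤ k :=
    (Polynomial.natDegree_C_mul_le _ _).trans (natDegree_weightScaling_le F (hf i))
  have hcoeff := coeff_aeval_of_totalDegree_le hk hdeg hRd
  rw [hp0, Polynomial.coeff_zero] at hcoeff
  simpa [hp, coeff_weightScaling, div_eq_inv_mul] using hcoeff.symm

variable {w} in
lemma algebraicIndependent_div_of_weightedTotalDegree_ne {w' : σ → ℕ}
    {f s : Fin 2 → MvPolynomial σ K} {k : ℕ} (hk : k ≠ 0)
    (hf : ∀ i, weightedTotalDegree w (f i) ≤ k) (hs : ∀ i, IsWeightedHomogeneous w (s i) 0)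
    (hnum : weightedHomogeneousComponent w k (f 0) * s 1 ≠ 0)
    (hden : s 0 * weightedHomogeneousComponent w k (f 1) ≠ 0)
    (hne : weightedTotalDegree w' (weightedHomogeneousComponent w k (f 0) * s 1) ≠
      weightedTotalDegree w' (s 0 * weightedHomogeneousComponent w k (f 1))) :
    AlgebraicIndependent K fun i => algebraMap _ F (f i) / algebraMap _ F (s i) := by
  refine algebraicIndependent_iff.2 fun R hR => of_not_not fun hR0 => ?_
  have hlead := aeval_homogeneousComponent_div_eq_zero F hk hf hs le_rfl hR
  have hlead1 : algebraMap (MvPolynomial σ K) F (weightedHomogeneousComponent w k (f 1)) /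
      algebraMap _ F (s 1) ≠ 0 :=
    div_ne_zero ((FaithfulSMul.algebraMap_eq_zero_iff _ F).not.2 (right_ne_zero_of_mul hden))
      ((FaithfulSMul.algebraMap_eq_zero_iff _ F).not.2 (right_ne_zero_of_mul hnum))
  have halg := isAlgebraic_div_of_aeval_eq_zero (homogeneousComponent_isHomogeneous _ R)
    (homogeneousComponent_totalDegree_ne_zero hR0) hlead1 hlead
  refine transcendental_div_of_weightedTotalDegree_ne F hnum hden hne ?_
  rwa [map_mul, map_mul, ← div_div_div_eq]

end Fractions

theorem stmt_19_general {σ K F : Type*} [CommRing K] [Field F] [Algebra K F]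
    [Algebra (MvPolynomial σ K) F] [IsScalarTower K (MvPolynomial σ K) F]
    [IsFractionRing (MvPolynomial σ K) F] (w : σ → ℕ) {t : σ} (ht : w t = 0)
    {G H : MvPolynomial σ K} {k a b : ℕ} (hk : k ≠ 0)
    (hGdeg : weightedTotalDegree w G ≤ k) (hHdeg : weightedTotalDegree w H ≤ k)
    (hne : degreeOf t (weightedHomogeneousComponent w k G) + b ≠
      a + degreeOf t (weightedHomogeneousComponent w k H))
    (hG : weightedHomogeneousComponent w k G ≠ 0)
    (hdep : ¬ AlgebraicIndependent K
      ![algebraMap _ F G / algebraMap (MvPolynomial σ K) F (X t) ^ a,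
        algebraMap _ F H / algebraMap (MvPolynomial σ K) F (X t) ^ b]) :
    weightedHomogeneousComponent w k H = 0 := by
  classical
  have := (algebraMap_injective_of_isFractionRing σ K F).isDomain
  by_contra hH
  have hX (n : ℕ) : IsWeightedHomogeneous w (X t ^ n : MvPolynomial σ K) 0 := by
    simpa [ht] using (isWeightedHomogeneous_X K w t).pow n
  have hX0 (n : ℕ) : (X t ^ n : MvPolynomial σ K) ≠ 0 := pow_ne_zero n (X_ne_zero t)
  have hind := algebraicIndependent_div_of_weightedTotalDegree_ne F (w' := Pi.single t 1)
    (f := ![G, H]) (s := ![X t ^ a, X t ^ b]) hk (Fin.forall_fin_two.2 ⟨hGdeg, hHdeg⟩)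
    (Fin.forall_fin_two.2 ⟨hX a, hX b⟩) (mul_ne_zero hG (hX0 b)) (mul_ne_zero (hX0 a) hH)
    (by simpa [degreeOf_mul_eq hG (hX0 b), degreeOf_mul_eq (hX0 a) hH] using hne)
  refine hdep ?_
  convert hind using 1
  ext i
  fin_cases i <;> simp

/-- Work in `ℝ[x₁,…,x_N, y₁,…,y_M, t]`, modelled as
`MvPolynomial (Fin N ⊕ Fin M ⊕ Unit) ℝ` with `t = X (Sum.inr (Sum.inr ()))`.  Let `G, H` have
degree at most `2` in the `y`-variables, with `y`-degree-2 homogeneous parts `G₂, H₂` not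
involving `t`, and `G₂ ≠ 0`.  If `G/t²` and `H/t³` are algebraically dependent in the fraction
field, then `H₂ = 0`. -/
theorem stmt_19 (N M : ℕ)
    (G H : MvPolynomial (Fin N ⊕ Fin M ⊕ Unit) ℝ)
    (hGdeg : MvPolynomial.weightedTotalDegree (yWeight N M) G ≤ 2)
    (hHdeg : MvPolynomial.weightedTotalDegree (yWeight N M) H ≤ 2)
    (hG2t : MvPolynomial.degreeOf (Sum.inr (Sum.inr ()))
      (MvPolynomial.weightedHomogeneousComponent (yWeight N M) 2 G) = 0)
    (hH2t : MvPolynomial.degreeOf (Sum.inr (Sum.inr ()))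
      (MvPolynomial.weightedHomogeneousComponent (yWeight N M) 2 H) = 0)
    (hG2 : MvPolynomial.weightedHomogeneousComponent (yWeight N M) 2 G ≠ 0)
    (R : MvPolynomial (Fin 2) ℝ) (hR : R ≠ 0)
    (hdep :
      MvPolynomial.eval₂
        ((algebraMap (MvPolynomial (Fin N ⊕ Fin M ⊕ Unit) ℝ)
            (FractionRing (MvPolynomial (Fin N ⊕ Fin M ⊕ Unit) ℝ))).comp MvPolynomial.C)
        ![algebraMap (MvPolynomial (Fin N ⊕ Fin M ⊕ Unit) ℝ)
            (FractionRing (MvPolynomial (Fin N ⊕ Fin M ⊕ Unit) ℝ)) G /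
          (algebraMap (MvPolynomial (Fin N ⊕ Fin M ⊕ Unit) ℝ)
            (FractionRing (MvPolynomial (Fin N ⊕ Fin M ⊕ Unit) ℝ))
            (MvPolynomial.X (Sum.inr (Sum.inr ())))) ^ 2,
          algebraMap (MvPolynomial (Fin N ⊕ Fin M ⊕ Unit) ℝ)
            (FractionRing (MvPolynomial (Fin N ⊕ Fin M ⊕ Unit) ℝ)) H /
          (algebraMap (MvPolynomial (Fin N ⊕ Fin M ⊕ Unit) ℝ)
            (FractionRing (MvPolynomial (Fin N ⊕ Fin M ⊕ Unit) ℝ))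
            (MvPolynomial.X (Sum.inr (Sum.inr ())))) ^ 3] R = 0) :
    MvPolynomial.weightedHomogeneousComponent (yWeight N M) 2 H = 0 :=
  stmt_19_general (yWeight N M) rfl two_ne_zero hGdeg hHdeg (by omega) hG2 fun hind =>
    hR (algebraicIndependent_iff.1 hind R hdep)
end
end
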